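/- arXiv:2506.09752 — 5 statements merged into one kernel-verified Lean document; each statement's English description precedes it below -/
import Mathlib

section
/- (Fundamental solution of the Bopp–Podolsky operator, distributional form.) Let a > 0 and define K_a : ℝ³ → ℝ by K_a(x) = (1 - exp(-‖x‖/a))/‖x‖ for x ≠ 0 and K_a(0) = 1/a. Then for every smooth compactly supported test function φ : ℝ³ → ℝ one has ∫_{ℝ³} K_a(x) ( -Δφ(x) + a² Δ²φ(x) ) dx = 4π φ(0), where Δφ is the Laplacian of φ and Δ²φ = Δ(Δφ) is the bi-Laplacian. -/
open MeasureTheory Real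
open scoped ENNReal Classical

noncomputable section

abbrev E3 := EuclideanSpace ℝ (Fin 3)

/-- Bopp–Podolsky kernel with parameter `a`. -/
def Ka (a : ℝ) (x : E3) : ℝ := if x = 0 then 1 / a else (1 - Real.exp (-‖x‖ / a)) / ‖x‖

/-- Laplacian of `f` at `x`: sum of second derivatives along the coordinate directions. -/
def lap (f : E3 → ℝ) (x : E3) : ℝ :=
  ∑ i : Fin 3, fderiv ℝ (fun y => fderiv ℝ f y (EuclideanSpace.single i 1)) x
    (EuclideanSpace.single i 1)

/-!
For `u` of class `C²` on the line, `Δ(u(‖x‖) / ‖x‖) = u''(‖x‖) / ‖x‖ - 4π u(0) δ` on `ℝ³`. With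
`u(r) = 1 - e^(-r/a)` the point mass is absent and `Δ K_a = -a⁻² Y`, where `Y = e^(-‖x‖/a) / ‖x‖`;
with `u(r) = e^(-r/a)` one gets the Yukawa equation `(a² Δ - 1) Y = -4π a² δ`. Since
`-Δφ + a² Δ²φ = Δ(a² Δφ - φ)`, the two identities combine to
`∫ K_a Δ(a² Δφ - φ) = -a⁻² ∫ Y (a² Δφ - φ) = 4π φ(0)`.

For the Laplacian of a radial function `g(‖x‖)` on an `n`-dimensional space, one derivative is moved
by parts onto `g`, which is harmless because `g(‖x‖) / ‖x‖` is still integrable at the origin. What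
remains is `-∫ g'(‖x‖) ∂ᵣψ`, and on each ray the fundamental theorem of calculus applied to
`r ↦ h(r) ψ(rω)`, where `h(r) = rⁿ⁻¹ g'(r)`, produces the boundary value `h(0) ψ(0)`.
-/

open Set Filter Topology Metric Laplacian InnerProductSpace
open Module (finrank)

section Ray

variable {E : Type*} [NormedAddCommGroup E] [NormedSpace ℝ E]

theorem hasDerivAt_mul_comp_ray {h : ℝ → ℝ} (hh : Differentiable ℝ h) {ψ : E → ℝ}
    (hψ : Differentiable ℝ ψ) (w : E) (r : ℝ) :
    HasDerivAt (fun r => h r * ψ (r • w))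
      (deriv h r * ψ (r • w) + h r * fderiv ℝ ψ (r • w) w) r := by
  have hline : HasDerivAt (fun r : ℝ => r • w) w r := by
    simpa using (hasDerivAt_id r).smul_const w
  exact (hh r).hasDerivAt.mul ((hψ _).hasFDerivAt.comp_hasDerivAt r hline)

theorem integral_Ioi_deriv_mul_comp_ray {h : ℝ → ℝ} (hh : ContDiff ℝ 1 h) {ψ : E → ℝ}
    (hψ : ContDiff ℝ 1 ψ) (hc : HasCompactSupport ψ) {w : E} (hw : w ≠ 0) :
    ∫ r in Ioi (0 : ℝ), (deriv h r * ψ (r • w) + h r * fderiv ℝ ψ (r • w) w) =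
      -(h 0 * ψ 0) := by
  have hc' : HasCompactSupport fun r : ℝ => h r * ψ (r • w) :=
    (hc.comp_isClosedEmbedding (isClosedEmbedding_smul_left hw)).mul_left
  have hFTC := HasCompactSupport.integral_Ioi_deriv_eq (by fun_prop) hc' 0
  simpa only [(hasDerivAt_mul_comp_ray (hh.differentiable one_ne_zero)
    (hψ.differentiable one_ne_zero) w _).deriv, zero_smul] using hFTC

end Ray

section Polar

variable {E : Type*} [NormedAddCommGroup E] [NormedSpace ℝ E] [FiniteDimensional ℝ E]
  [MeasurableSpace E] [BorelSpace E] {μ : Measure E} [μ.IsAddHaarMeasure]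

theorem integral_eq_integral_toSphere [Nontrivial E] {F : Type*} [NormedAddCommGroup F]
    [NormedSpace ℝ F] {f : E → F} (hf : Integrable f μ) :
    ∫ x, f x ∂μ = ∫ ω : sphere (0 : E) 1,
      (∫ r in Ioi (0 : ℝ), r ^ (finrank ℝ E - 1) • f (r • (ω : E))) ∂μ.toSphere := by
  have hpres := μ.measurePreserving_homeomorphUnitSphereProd
  have hemb := (homeomorphUnitSphereProd E).measurableEmbedding
  let f' : sphere (0 : E) 1 × Ioi (0 : ℝ) → F := fun p => f (p.2.1 • p.1.1)
  have hf' : f' ∘ homeomorphUnitSphereProd E = f ∘ Subtype.val :=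
    funext fun x => congrArg f (congrArg Subtype.val ((homeomorphUnitSphereProd E).left_inv x))
  have hint : Integrable f' (μ.toSphere.prod (.volumeIoiPow (finrank ℝ E - 1))) := by
    rw [← hpres.integrable_comp_emb hemb, hf',
      ← integrableOn_iff_comap_subtypeVal (measurableSet_singleton _).compl]
    exact hf.integrableOn
  calc ∫ x, f x ∂μ
      = ∫ x : ({0}ᶜ : Set E), (f' ∘ homeomorphUnitSphereProd E) x ∂μ.comap (↑) := by
        rw [hf']
        exact ((integral_subtype_comap (measurableSet_singleton _).compl f).trans
          (by rw [restrict_compl_singleton])).symm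
    _ = ∫ ω, ∫ r, f' (ω, r) ∂.volumeIoiPow (finrank ℝ E - 1) ∂μ.toSphere := by
        rw [← integral_prod _ hint]
        exact hpres.integral_comp hemb f'
    _ = _ := by
        congr! 2 with ω
        simp only [Measure.volumeIoiPow, ENNReal.ofReal]
        rw [integral_withDensity_eq_integral_smul
            (measurable_subtype_coe.pow_const _).real_toNNReal,
          integral_subtype_comap measurableSet_Ioi
            fun r => Real.toNNReal (r ^ (finrank ℝ E - 1)) • f (r • ω.1)]
        refine setIntegral_congr_fun measurableSet_Ioi fun r hr => ?_
        simp only [NNReal.smul_def, Real.coe_toNNReal _ (pow_nonneg (le_of_lt hr) _)]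

theorem locallyIntegrable_inv_norm_pow {k : ℕ} (hk : k < finrank ℝ E) :
    LocallyIntegrable (fun x => (‖x‖ ^ k)⁻¹) μ := by
  refine locallyIntegrable_of_norm_le_rpow (C := 1) (α := k) (by lia) (by exact_mod_cast hk)
    (.of_forall fun x => ?_) (by fun_prop)
  rw [norm_inv, norm_pow, norm_norm, one_mul, Real.rpow_neg (norm_nonneg x), Real.rpow_natCast]

theorem locallyIntegrable_comp_norm_div_norm_pow {u : ℝ → ℝ} (hu : Continuous u) {k : ℕ}
    (hk : k < finrank ℝ E) : LocallyIntegrable (fun x => u ‖x‖ / ‖x‖ ^ k) μ := by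
  simp only [div_eq_mul_inv, ← smul_eq_mul, ← locallyIntegrableOn_univ]
  exact (locallyIntegrable_inv_norm_pow hk).locallyIntegrableOn univ |>.continuousOn_smul
    isOpen_univ.isLocallyClosed (hu.comp continuous_norm).continuousOn

theorem integrable_radial_mul_radialDeriv [Nontrivial E] {h : ℝ → ℝ} (hh : Continuous h)
    {ψ : E → ℝ} (hψ : ContDiff ℝ 1 ψ) (hc : HasCompactSupport ψ) :
    Integrable (fun x => h ‖x‖ / ‖x‖ ^ (finrank ℝ E - 1) * fderiv ℝ ψ x (‖x‖⁻¹ • x)) μ := by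
  refine ((locallyIntegrable_comp_norm_div_norm_pow hh
    (Nat.sub_one_lt Module.finrank_pos.ne')).integrable_smul_right_of_hasCompactSupport
      (hψ.continuous_fderiv one_ne_zero).norm (hc.fderiv ℝ).norm).mono ?_ (.of_forall fun x => ?_)
  · have hmeas : Measurable fun x => fderiv ℝ ψ x (‖x‖⁻¹ • x) :=
      ContinuousLinearMap.measurable_apply₂.comp
        ((measurable_fderiv ℝ ψ).prodMk (measurable_norm.inv.smul measurable_id))
    exact ((hh.measurable.comp measurable_norm).div (measurable_norm.pow_const _)).mul hmeas
      |>.aestronglyMeasurable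
  · rw [norm_mul, norm_smul, norm_norm]
    gcongr
    refine ((fderiv ℝ ψ x).le_opNorm _).trans (mul_le_of_le_one_right (norm_nonneg _) ?_)
    rw [norm_smul, norm_inv, norm_norm]
    exact inv_mul_le_one

theorem integral_radial_mul_radialDeriv [Nontrivial E] {h : ℝ → ℝ} (hh : ContDiff ℝ 1 h)
    {ψ : E → ℝ} (hψ : ContDiff ℝ 1 ψ) (hc : HasCompactSupport ψ) :
    ∫ x, h ‖x‖ / ‖x‖ ^ (finrank ℝ E - 1) * fderiv ℝ ψ x (‖x‖⁻¹ • x) ∂μ =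
      -(finrank ℝ E * μ.real (ball 0 1) * (h 0 * ψ 0)) -
        ∫ x, deriv h ‖x‖ / ‖x‖ ^ (finrank ℝ E - 1) * ψ x ∂μ := by
  have hint : Integrable (fun x => deriv h ‖x‖ / ‖x‖ ^ (finrank ℝ E - 1) * ψ x) μ :=
    (locallyIntegrable_comp_norm_div_norm_pow hh.continuous_deriv_one
      (Nat.sub_one_lt Module.finrank_pos.ne')).integrable_smul_right_of_hasCompactSupport
        hψ.continuous hc
  have hint' := integrable_radial_mul_radialDeriv (μ := μ) hh.continuous hψ hc
  have hray (ω : sphere (0 : E) 1) :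
      ∫ r in Ioi (0 : ℝ), r ^ (finrank ℝ E - 1) •
        (deriv h ‖r • (ω : E)‖ / ‖r • (ω : E)‖ ^ (finrank ℝ E - 1) * ψ (r • (ω : E)) +
          h ‖r • (ω : E)‖ / ‖r • (ω : E)‖ ^ (finrank ℝ E - 1) *
            fderiv ℝ ψ (r • (ω : E)) (‖r • (ω : E)‖⁻¹ • r • (ω : E))) = -(h 0 * ψ 0) := by
    rw [← integral_Ioi_deriv_mul_comp_ray hh hψ hc (ne_zero_of_mem_unit_sphere ω)]
    refine setIntegral_congr_fun measurableSet_Ioi fun r (hr : 0 < r) => ?_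
    have hnorm : ‖r • (ω : E)‖ = r := by simp [norm_smul, abs_of_pos hr]
    simp only [hnorm, inv_smul_smul₀ hr.ne', smul_eq_mul]
    field_simp
  rw [eq_sub_iff_add_eq', ← integral_add hint hint']
  refine (integral_eq_integral_toSphere (hint.add hint')).trans ?_
  refine (integral_congr_ae (.of_forall hray)).trans ?_
  rw [integral_const, Measure.toSphere_real_apply_univ, smul_eq_mul, mul_neg]

end Polar

section Cutoff

variable {E : Type*} [NormedAddCommGroup E] [NormedSpace ℝ E] [FiniteDimensional ℝ E]

/-- A smooth function which for `c > 0` vanishes on `‖x‖ ≤ 1 / c` and equals `1` on `‖x‖ ≥ 2 / c`;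
letting `c → ∞` allows a singularity at the origin to be cut out of an integral. -/
def punctureCutoff (c : ℝ) (x : E) : ℝ := 1 - (default : ContDiffBump (0 : E)) (c • x)

theorem contDiff_punctureCutoff (c : ℝ) {n : ℕ∞} : ContDiff ℝ n (punctureCutoff c : E → ℝ) :=
  contDiff_const.sub ((default : ContDiffBump (0 : E)).contDiff.comp (contDiff_const_smul c))

theorem abs_punctureCutoff_le_one (c : ℝ) (x : E) : |punctureCutoff c x| ≤ 1 := by
  let f : ContDiffBump (0 : E) := default
  have hle : f (c • x) ≤ 1 := f.le_one
  have hnonneg : 0 ≤ f (c • x) := f.nonneg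
  change |1 - f (c • x)| ≤ 1
  grind

theorem zero_notMem_tsupport_punctureCutoff (c : ℝ) :
    (0 : E) ∉ tsupport (punctureCutoff c : E → ℝ) := by
  rw [notMem_tsupport_iff_eventuallyEq]
  have hlim : Tendsto (fun x : E => c • x) (𝓝 0) (𝓝 0) := by
    simpa using (continuous_const_smul c).tendsto (0 : E)
  filter_upwards [hlim.eventually (default : ContDiffBump (0 : E)).eventuallyEq_one] with x hx
  simp [punctureCutoff, hx]

theorem eventually_punctureCutoff_eventuallyEq_one {x : E} (hx : x ≠ 0) :
    ∀ᶠ c : ℝ in atTop, punctureCutoff c =ᶠ[𝓝 x] 1 := by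
  let f : ContDiffBump (0 : E) := default
  filter_upwards [eventually_gt_atTop (f.rOut / ‖x‖)] with c hc
  have hc0 : 0 < c := (by have := f.rOut_pos; positivity : 0 ≤ f.rOut / ‖x‖).trans_lt hc
  have hopen : ∀ᶠ y in 𝓝 x, f.rOut < c * ‖y‖ :=
    (continuous_const.mul continuous_norm).continuousAt.eventually_const_lt
      ((div_lt_iff₀ (norm_pos_iff.2 hx)).1 hc)
  filter_upwards [hopen] with y hy
  have hzero : f (c • y) = 0 := f.zero_of_le_dist <| by
    rw [dist_zero_right, norm_smul, Real.norm_of_nonneg hc0.le]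
    exact hy.le
  exact sub_eq_self.2 hzero

theorem exists_norm_mul_norm_fderiv_punctureCutoff_le :
    ∃ C, ∀ (c : ℝ) (x : E), ‖x‖ * ‖fderiv ℝ (punctureCutoff c) x‖ ≤ C := by
  let f : ContDiffBump (0 : E) := default
  have hcont : Continuous fun y => ‖y‖ * ‖fderiv ℝ f y‖ :=
    continuous_norm.mul (f.contDiff.continuous_fderiv one_ne_zero).norm
  obtain ⟨C, hC⟩ := hcont.bounded_above_of_compact_support
    (f.hasCompactSupport.fderiv ℝ).norm.mul_left
  refine ⟨C, fun c x => ?_⟩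
  have hfderiv : fderiv ℝ (punctureCutoff c) x = -(c • fderiv ℝ f (c • x)) := by
    rw [← fderiv_comp_smul]
    exact fderiv_const_sub 1
  -- The left-hand side is invariant under scaling: it depends on `c` and `x` only through `c • x`.
  calc ‖x‖ * ‖fderiv ℝ (punctureCutoff c) x‖ = ‖c • x‖ * ‖fderiv ℝ f (c • x)‖ := by
        rw [hfderiv, norm_neg, norm_smul, norm_smul]; ring
    _ ≤ C := (Real.le_norm_self _).trans (hC _)

theorem exists_abs_fderiv_punctureCutoff_mul_le (v : E) :
    ∃ C, ∀ {χ : E → ℝ}, Differentiable ℝ χ → ∀ (c : ℝ) {x : E}, x ≠ 0 →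
      |fderiv ℝ (punctureCutoff c * χ) x v| ≤ |fderiv ℝ χ x v| + ‖x‖⁻¹ * (C * |χ x|) := by
  obtain ⟨C, hC⟩ := exists_norm_mul_norm_fderiv_punctureCutoff_le (E := E)
  refine ⟨C * ‖v‖, fun {χ} hχ c {x} hx => ?_⟩
  have hcutoff : |fderiv ℝ (punctureCutoff c) x v| ≤ ‖x‖⁻¹ * (C * ‖v‖) := by
    refine ((fderiv ℝ (punctureCutoff c) x).le_opNorm v).trans ?_
    rw [← mul_assoc]
    gcongr
    exact (le_inv_mul_iff₀ (norm_pos_iff.2 hx)).2 (hC c x)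
  rw [fderiv_mul ((contDiff_punctureCutoff c (n := 1)).differentiable one_ne_zero x) (hχ x)]
  calc |punctureCutoff c x * fderiv ℝ χ x v + χ x * fderiv ℝ (punctureCutoff c) x v|
      ≤ |punctureCutoff c x| * |fderiv ℝ χ x v| +
          |χ x| * |fderiv ℝ (punctureCutoff c) x v| := by
        rw [← abs_mul, ← abs_mul]
        exact abs_add_le _ _
    _ ≤ 1 * |fderiv ℝ χ x v| + |χ x| * (‖x‖⁻¹ * (C * ‖v‖)) := by
        gcongr
        exact abs_punctureCutoff_le_one c x
    _ = |fderiv ℝ χ x v| + ‖x‖⁻¹ * (C * ‖v‖ * |χ x|) := by ring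

end Cutoff

section IntegrationByParts

variable {E : Type*} [NormedAddCommGroup E] [NormedSpace ℝ E] [FiniteDimensional ℝ E]
  [MeasurableSpace E] [BorelSpace E] {μ : Measure E} [μ.IsAddHaarMeasure] {f χ : E → ℝ} {v : E}

theorem locallyIntegrable_of_div_norm [Nontrivial E]
    (hf : LocallyIntegrable (fun x => f x / ‖x‖) μ) : LocallyIntegrable f μ := by
  have hmul : LocallyIntegrable (fun x => ‖x‖ • (f x / ‖x‖)) μ := by
    rw [← locallyIntegrableOn_univ] at hf ⊢
    exact hf.continuousOn_smul isOpen_univ.isLocallyClosed continuous_norm.continuousOn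
  refine hmul.congr ?_
  filter_upwards [μ.ae_ne 0] with x hx
  exact mul_div_cancel₀ _ (norm_ne_zero_iff.2 hx)

theorem integral_mul_fderiv_of_zero_notMem_tsupport (hf : ∀ x ≠ 0, DifferentiableAt ℝ f x)
    (hf_int : LocallyIntegrable f μ) (hf'_int : LocallyIntegrable (fun x => fderiv ℝ f x v) μ)
    (hχ : ContDiff ℝ 1 χ) (hc : HasCompactSupport χ) (h0 : 0 ∉ tsupport χ) :
    ∫ x, f x * fderiv ℝ χ x v ∂μ = -∫ x, fderiv ℝ f x v * χ x ∂μ :=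
  integral_mul_fderiv_eq_neg_fderiv_mul_of_integrable
    (hf'_int.integrable_smul_right_of_hasCompactSupport hχ.continuous hc)
    (hf_int.integrable_smul_right_of_hasCompactSupport
      ((hχ.continuous_fderiv one_ne_zero).clm_apply continuous_const) (hc.fderiv_apply ℝ v))
    (hf_int.integrable_smul_right_of_hasCompactSupport hχ.continuous hc)
    (fun _ hx => hf _ (ne_of_mem_of_not_mem hx h0)) fun x _ => hχ.differentiable one_ne_zero x

theorem tendsto_integral_mul_punctureCutoff_mul [Nontrivial E] (hf : LocallyIntegrable f μ)
    (hχ : Continuous χ) (hc : HasCompactSupport χ) :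
    Tendsto (fun c => ∫ x, f x * (punctureCutoff c x * χ x) ∂μ) atTop
      (𝓝 (∫ x, f x * χ x ∂μ)) := by
  refine tendsto_integral_filter_of_dominated_convergence (fun x => ‖f x * χ x‖)
    (.of_forall fun c => ?_) (.of_forall fun c => .of_forall fun x => ?_)
    (hf.integrable_smul_right_of_hasCompactSupport hχ hc).norm ?_
  · exact hf.aestronglyMeasurable.mul
      (((contDiff_punctureCutoff c (n := 0)).continuous.mul hχ).aestronglyMeasurable)
  · rw [mul_left_comm, norm_mul]
    exact mul_le_of_le_one_left (norm_nonneg _) (abs_punctureCutoff_le_one c x)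
  · filter_upwards [μ.ae_ne 0] with x hx
    refine tendsto_const_nhds.congr' ?_
    filter_upwards [eventually_punctureCutoff_eventuallyEq_one hx] with c hc
    rw [hc.eq_of_nhds, Pi.one_apply, one_mul]

theorem tendsto_integral_mul_fderiv_punctureCutoff_mul [Nontrivial E]
    (hf : LocallyIntegrable (fun x => f x / ‖x‖) μ) (hχ : ContDiff ℝ 1 χ)
    (hc : HasCompactSupport χ) :
    Tendsto (fun c => ∫ x, f x * fderiv ℝ (punctureCutoff c * χ) x v ∂μ) atTop
      (𝓝 (∫ x, f x * fderiv ℝ χ x v ∂μ)) := by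
  obtain ⟨C, hC⟩ := exists_abs_fderiv_punctureCutoff_mul_le v
  have hf' := locallyIntegrable_of_div_norm hf
  have hbound : Integrable
      (fun x => ‖f x * fderiv ℝ χ x v‖ + ‖f x / ‖x‖ * (C * |χ x|)‖) μ :=
    (hf'.integrable_smul_right_of_hasCompactSupport
      ((hχ.continuous_fderiv one_ne_zero).clm_apply continuous_const)
      (hc.fderiv_apply ℝ v)).norm.add
    (hf.integrable_smul_right_of_hasCompactSupport (continuous_const.mul hχ.continuous.abs)
      hc.norm.mul_left).norm
  refine tendsto_integral_filter_of_dominated_convergence _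
    (.of_forall fun c => ?_) (.of_forall fun c => ?_) hbound ?_
  · exact hf'.aestronglyMeasurable.mul (measurable_fderiv_apply_const ℝ _ v).aestronglyMeasurable
  · filter_upwards [μ.ae_ne 0] with x hx
    calc ‖f x * fderiv ℝ (punctureCutoff c * χ) x v‖
        ≤ |f x| * (|fderiv ℝ χ x v| + ‖x‖⁻¹ * (C * |χ x|)) := by
          rw [norm_mul, Real.norm_eq_abs, Real.norm_eq_abs]
          gcongr
          exact hC (hχ.differentiable one_ne_zero) c hx
      _ = ‖f x * fderiv ℝ χ x v‖ + |f x / ‖x‖| * (C * |χ x|) := by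
          rw [norm_mul, Real.norm_eq_abs, Real.norm_eq_abs, abs_div, abs_norm]
          ring
      _ ≤ _ := by
          rw [norm_mul (f x / ‖x‖), Real.norm_eq_abs (f x / ‖x‖)]
          gcongr
          exact Real.le_norm_self _
  · filter_upwards [μ.ae_ne 0] with x hx
    refine tendsto_const_nhds.congr' ?_
    filter_upwards [eventually_punctureCutoff_eventuallyEq_one hx] with c hc
    have hmul : punctureCutoff c * χ =ᶠ[𝓝 x] χ := by simpa using hc.mul .rfl
    rw [hmul.fderiv_eq]

theorem integral_mul_fderiv_of_differentiableAt_ne_zero [Nontrivial E]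
    (hf : ∀ x ≠ 0, DifferentiableAt ℝ f x) (hf_int : LocallyIntegrable (fun x => f x / ‖x‖) μ)
    (hf'_int : LocallyIntegrable (fun x => fderiv ℝ f x v) μ) (hχ : ContDiff ℝ 1 χ)
    (hc : HasCompactSupport χ) :
    ∫ x, f x * fderiv ℝ χ x v ∂μ = -∫ x, fderiv ℝ f x v * χ x ∂μ := by
  refine tendsto_nhds_unique (tendsto_integral_mul_fderiv_punctureCutoff_mul hf_int hχ hc) ?_
  refine (tendsto_integral_mul_punctureCutoff_mul hf'_int hχ.continuous hc).neg.congr fun c => ?_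
  refine (integral_mul_fderiv_of_zero_notMem_tsupport hf (locallyIntegrable_of_div_norm hf_int)
    hf'_int ((contDiff_punctureCutoff c).mul hχ) hc.mul_left fun h0 => ?_).symm
  exact zero_notMem_tsupport_punctureCutoff c (tsupport_mul_subset_left h0)

end IntegrationByParts

section Laplacian

variable {E : Type*} [NormedAddCommGroup E] [InnerProductSpace ℝ E]

theorem hasFDerivAt_comp_norm {g : ℝ → ℝ} {g' : ℝ} {x : E} (hx : x ≠ 0)
    (hg : HasDerivAt g g' ‖x‖) :
    HasFDerivAt (fun y : E => g ‖y‖) ((g' / ‖x‖) • innerSL ℝ x) x := by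
  have hnorm := (hasStrictFDerivAt_norm_sq x).hasFDerivAt.sqrt
    (pow_ne_zero 2 (norm_ne_zero_iff.2 hx))
  simp only [Real.sqrt_sq (norm_nonneg _)] at hnorm
  refine (hg.comp_hasFDerivAt x hnorm).congr_fderiv ?_
  ext v
  simp only [smul_apply, smul_eq_mul, nsmul_eq_mul]
  field_simp
  norm_num

theorem sum_inner_mul_apply {ι : Type*} [Fintype ι] (b : OrthonormalBasis ι ℝ E)
    (L : E →L[ℝ] ℝ) (x : E) : ∑ i, ⟪x, b i⟫_ℝ * L (b i) = L x := by
  conv_rhs => rw [← b.sum_repr' x]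
  simp only [map_sum, map_smul, smul_eq_mul, real_inner_comm]

theorem sum_fderiv_comp_norm_mul_fderiv {ι : Type*} [Fintype ι] (b : OrthonormalBasis ι ℝ E)
    {g : ℝ → ℝ} {g' : ℝ} {ψ : E → ℝ} {x : E} (hx : x ≠ 0) (hg : HasDerivAt g g' ‖x‖) :
    ∑ i, fderiv ℝ (fun y : E => g ‖y‖) x (b i) * fderiv ℝ ψ x (b i) =
      g' * fderiv ℝ ψ x (‖x‖⁻¹ • x) := by
  rw [map_smul, smul_eq_mul, ← sum_inner_mul_apply b (fderiv ℝ ψ x) x,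
    (hasFDerivAt_comp_norm hx hg).fderiv, Finset.mul_sum, Finset.mul_sum]
  refine Finset.sum_congr rfl fun i _ => ?_
  simp only [smul_apply, innerSL_apply_apply, smul_eq_mul]
  ring

variable [FiniteDimensional ℝ E] {ψ : E → ℝ}

theorem laplacian_eq_sum_fderiv_fderiv {ι : Type*} [Fintype ι] (b : OrthonormalBasis ι ℝ E)
    (hψ : ContDiff ℝ 2 ψ) :
    Δ ψ = fun x => ∑ i, fderiv ℝ (fun y => fderiv ℝ ψ y (b i)) x (b i) := by
  rw [laplacian_eq_iteratedFDeriv_orthonormalBasis ψ b]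
  ext x
  have hdiff : DifferentiableAt ℝ (fderiv ℝ ψ) x :=
    (hψ.fderiv_right (m := 1) le_rfl).differentiable one_ne_zero x
  simp [iteratedFDeriv_two_apply, fderiv_clm_apply hdiff (differentiableAt_const _)]

theorem contDiff_laplacian {n : ℕ} (hψ : ContDiff ℝ (n + 2) ψ) : ContDiff ℝ n (Δ ψ) := by
  rw [laplacian_eq_sum_fderiv_fderiv (stdOrthonormalBasis ℝ E) (hψ.of_le le_add_self)]
  refine ContDiff.sum fun i _ => ?_
  have hfderiv : ContDiff ℝ (n + 1) fun y => fderiv ℝ ψ y (stdOrthonormalBasis ℝ E i) :=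
    (hψ.fderiv_right (by rw [add_assoc, one_add_one_eq_two])).clm_apply contDiff_const
  exact (hfderiv.fderiv_right le_rfl).clm_apply contDiff_const

theorem hasCompactSupport_laplacian (hc : HasCompactSupport ψ) : HasCompactSupport (Δ ψ) := by
  refine hc.mono' fun x hx => by_contra fun hx' => hx ?_
  rw [(laplacian_congr_nhds (notMem_tsupport_iff_eventuallyEq.1 hx')).eq_of_nhds]
  exact congrFun (laplacian_const (c := (0 : ℝ))) x

end Laplacian

section RadialGreen

variable {E : Type*} [NormedAddCommGroup E] [InnerProductSpace ℝ E] [FiniteDimensional ℝ E]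
  [Nontrivial E] [MeasurableSpace E] [BorelSpace E] {μ : Measure E} [μ.IsAddHaarMeasure]
  {g h : ℝ → ℝ} {ψ : E → ℝ}

theorem locallyIntegrable_fderiv_comp_norm
    (hg : ∀ r > 0, HasDerivAt g (h r / r ^ (finrank ℝ E - 1)) r) (hh : Continuous h) (v : E) :
    LocallyIntegrable (fun x : E => fderiv ℝ (fun y : E => g ‖y‖) x v) μ := by
  refine ((locallyIntegrable_comp_norm_div_norm_pow (hh.mul continuous_const)
    (Nat.sub_one_lt Module.finrank_pos.ne')).mono (f := fun x => h ‖x‖ * ‖v‖ / _)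
    (measurable_fderiv_apply_const ℝ _ v).aestronglyMeasurable ?_)
  filter_upwards [μ.ae_ne 0] with x hx
  rw [(hasFDerivAt_comp_norm hx (hg _ (norm_pos_iff.2 hx))).fderiv]
  calc ‖h ‖x‖ / ‖x‖ ^ (finrank ℝ E - 1) / ‖x‖ * ⟪x, v⟫_ℝ‖
      ≤ ‖h ‖x‖ / ‖x‖ ^ (finrank ℝ E - 1) / ‖x‖‖ * (‖x‖ * ‖v‖) := by
        rw [norm_mul]
        gcongr
        exact norm_inner_le_norm x v
    _ = ‖h ‖x‖ * ‖v‖ / ‖x‖ ^ (finrank ℝ E - 1)‖ := by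
        simp only [norm_div, norm_mul, norm_norm]
        field_simp [norm_ne_zero_iff.2 hx]

theorem integral_comp_norm_mul_laplacian
    (hg : ∀ r > 0, HasDerivAt g (h r / r ^ (finrank ℝ E - 1)) r) (hh : ContDiff ℝ 1 h)
    (hg_int : LocallyIntegrable (fun x : E => g ‖x‖ / ‖x‖) μ)
    (hψ : ContDiff ℝ 2 ψ) (hc : HasCompactSupport ψ) :
    ∫ x, g ‖x‖ * Δ ψ x ∂μ =
      finrank ℝ E * μ.real (ball 0 1) * (h 0 * ψ 0) +
        ∫ x, deriv h ‖x‖ / ‖x‖ ^ (finrank ℝ E - 1) * ψ x ∂μ := by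
  let b := stdOrthonormalBasis ℝ E
  have hg' (x : E) (hx : x ≠ 0) := hg _ (norm_pos_iff.2 hx)
  have hψ' (i) : ContDiff ℝ 1 fun x => fderiv ℝ ψ x (b i) :=
    (hψ.fderiv_right le_rfl).clm_apply contDiff_const
  have hc' (i) : HasCompactSupport fun x => fderiv ℝ ψ x (b i) := hc.fderiv_apply ℝ (b i)
  have hG' (i) := locallyIntegrable_fderiv_comp_norm (μ := μ) hg hh.continuous (b i)
  calc ∫ x, g ‖x‖ * Δ ψ x ∂μ
      = ∑ i, ∫ x, g ‖x‖ * fderiv ℝ (fun y => fderiv ℝ ψ y (b i)) x (b i) ∂μ := by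
        simp only [laplacian_eq_sum_fderiv_fderiv b hψ, Finset.mul_sum]
        exact integral_finsetSum _ fun i _ =>
          (locallyIntegrable_of_div_norm hg_int).integrable_smul_right_of_hasCompactSupport
            (((hψ' i).continuous_fderiv one_ne_zero).clm_apply continuous_const)
            ((hc' i).fderiv_apply ℝ (b i))
    _ = ∑ i, -∫ x, fderiv ℝ (fun y : E => g ‖y‖) x (b i) * fderiv ℝ ψ x (b i) ∂μ :=
        Finset.sum_congr rfl fun i _ => integral_mul_fderiv_of_differentiableAt_ne_zero
          (fun x hx => (hasFDerivAt_comp_norm hx (hg' x hx)).differentiableAt) hg_int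
          (hG' i) (hψ' i) (hc' i)
    _ = -∫ x, ∑ i, fderiv ℝ (fun y : E => g ‖y‖) x (b i) * fderiv ℝ ψ x (b i) ∂μ := by
        rw [Finset.sum_neg_distrib, integral_finsetSum]
        exact fun i _ =>
          (hG' i).integrable_smul_right_of_hasCompactSupport (hψ' i).continuous (hc' i)
    _ = -∫ x, h ‖x‖ / ‖x‖ ^ (finrank ℝ E - 1) * fderiv ℝ ψ x (‖x‖⁻¹ • x) ∂μ := by
        congr 1
        refine integral_congr_ae ?_
        filter_upwards [μ.ae_ne 0] with x hx
        exact sum_fderiv_comp_norm_mul_fderiv b hx (hg' x hx)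
    _ = _ := by
        rw [integral_radial_mul_radialDeriv hh (hψ.of_le one_le_two) hc]
        ring

end RadialGreen

section Yukawa

variable {a : ℝ} {u : ℝ → ℝ} {ψ : E3 → ℝ}

theorem lap_eq_laplacian (hψ : ContDiff ℝ 2 ψ) : lap ψ = Δ ψ := by
  rw [laplacian_eq_sum_fderiv_fderiv (EuclideanSpace.basisFun (Fin 3) ℝ) hψ]
  simp only [EuclideanSpace.basisFun_apply]
  rfl

theorem volume_real_ball_zero_one : volume.real (ball (0 : E3) 1) = π * 4 / 3 := by
  rw [measureReal_def, EuclideanSpace.volume_ball_fin_three, ENNReal.ofReal_one, one_pow, one_mul,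
    ENNReal.toReal_ofReal (by positivity)]

theorem integral_comp_norm_div_norm_mul_laplacian (hu : ContDiff ℝ 2 u) (hψ : ContDiff ℝ 2 ψ)
    (hc : HasCompactSupport ψ) :
    ∫ x, u ‖x‖ / ‖x‖ * Δ ψ x =
      -(4 * π * (u 0 * ψ 0)) + ∫ x, deriv (deriv u) ‖x‖ / ‖x‖ * ψ x := by
  have hdim : finrank ℝ E3 = 3 := finrank_euclideanSpace_fin
  have hu' : ContDiff ℝ 1 (deriv u) := hu.deriv'
  have hflux (r : ℝ) (hr : 0 < r) :
      HasDerivAt (fun r => u r / r) ((r * deriv u r - u r) / r ^ (finrank ℝ E3 - 1)) r := by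
    rw [hdim, mul_comm r, ← mul_one (u r)]
    exact (hu.differentiable two_ne_zero r).hasDerivAt.div (hasDerivAt_id r) hr.ne'
  have hflux' (r : ℝ) : deriv (fun r => r * deriv u r - u r) r = r * deriv (deriv u) r := by
    have := ((hasDerivAt_id r).mul (hu'.differentiable one_ne_zero r).hasDerivAt).sub
      (hu.differentiable two_ne_zero r).hasDerivAt
    exact this.deriv.trans (by simp)
  have hint : LocallyIntegrable (fun x : E3 => u ‖x‖ / ‖x‖ / ‖x‖) volume := by
    simp only [div_div, ← sq]
    exact locallyIntegrable_comp_norm_div_norm_pow hu.continuous (by rw [hdim]; norm_num)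
  have hGreen := integral_comp_norm_mul_laplacian hflux
    ((contDiff_id.mul hu').sub (hu.of_le one_le_two)) hint hψ hc
  rw [hGreen, hdim, volume_real_ball_zero_one]
  congr 1
  · push_cast
    ring
  · simp only [hflux']
    congr! 3 with x
    rcases eq_or_ne ‖x‖ 0 with hx | hx
    · simp [hx]
    · rw [Nat.add_one_sub_one, sq, mul_div_mul_left _ _ hx]

/-- The Yukawa kernel `e^(-‖x‖ / a) / ‖x‖` on `ℝ³`, with the junk value `0` at the origin. -/
def yukawaKernel (a : ℝ) (x : E3) : ℝ := exp (-‖x‖ / a) / ‖x‖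

theorem locallyIntegrable_yukawaKernel : LocallyIntegrable (yukawaKernel a) := by
  have hk : 1 < finrank ℝ E3 := by simp
  refine (locallyIntegrable_comp_norm_div_norm_pow (u := fun r => exp (-r / a)) (by fun_prop)
    hk).congr (.of_forall fun x => ?_)
  simp only [pow_one, yukawaKernel]

theorem deriv_deriv_exp_neg_div :
    deriv (deriv fun r => exp (-r / a)) = fun r => (a ^ 2)⁻¹ * exp (-r / a) := by
  have hderiv (r : ℝ) : HasDerivAt (fun r => exp (-r / a)) (exp (-r / a) * (-1 / a)) r :=
    ((hasDerivAt_id r).neg.div_const a).exp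
  ext r
  rw [funext fun r => (hderiv r).deriv, ((hderiv r).mul_const _).deriv]
  ring

theorem integral_yukawaKernel_mul_laplacian (hψ : ContDiff ℝ 2 ψ) (hc : HasCompactSupport ψ) :
    ∫ x, yukawaKernel a x * Δ ψ x =
      -(4 * π * ψ 0) + (a ^ 2)⁻¹ * ∫ x, yukawaKernel a x * ψ x := by
  have h := integral_comp_norm_div_norm_mul_laplacian (u := fun r => exp (-r / a)) (by fun_prop)
    hψ hc
  simp only [deriv_deriv_exp_neg_div, mul_div_assoc, mul_assoc, integral_const_mul] at h
  simpa [yukawaKernel, mul_assoc] using h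

theorem integral_Ka_mul_laplacian (hψ : ContDiff ℝ 2 ψ) (hc : HasCompactSupport ψ) :
    ∫ x, Ka a x * Δ ψ x = -((a ^ 2)⁻¹ * ∫ x, yukawaKernel a x * ψ x) := by
  have hKa : ∀ᵐ x : E3, Ka a x * Δ ψ x = (1 - exp (-‖x‖ / a)) / ‖x‖ * Δ ψ x := by
    filter_upwards [volume.ae_ne 0] with x hx
    rw [Ka, if_neg hx]
  have h := integral_comp_norm_div_norm_mul_laplacian (u := fun r => 1 - exp (-r / a))
    (by fun_prop) hψ hc
  have hderiv : deriv (deriv fun r => 1 - exp (-r / a)) = fun r => -((a ^ 2)⁻¹ * exp (-r / a)) := by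
    rw [deriv_const_sub', deriv.fun_neg', deriv_deriv_exp_neg_div]
  rw [integral_congr_ae hKa, h, hderiv, neg_zero, zero_div, exp_zero, sub_self, zero_mul, mul_zero,
    neg_zero, zero_add, ← integral_const_mul, ← integral_neg]
  congr! 2
  rw [yukawaKernel]
  ring

theorem boppPodolsky_fundamental_solution_general (a : ℝ) (ha : a ≠ 0) (φ : E3 → ℝ)
    (hφ : ContDiff ℝ 4 φ) (hφc : HasCompactSupport φ) :
    ∫ x, Ka a x * (-(lap φ x) + a ^ 2 * lap (lap φ) x) = 4 * π * φ 0 := by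
  have hφ₂ : ContDiff ℝ 2 φ := hφ.of_le (by norm_num)
  have hΔ : ContDiff ℝ 2 (Δ φ) := contDiff_laplacian (n := 2) (by norm_num; exact hφ)
  have hΔc := hasCompactSupport_laplacian hφc
  have hlap (x : E3) : -(lap φ x) + a ^ 2 * lap (lap φ) x = Δ (a ^ 2 • Δ φ - φ) x := by
    rw [ContDiffAt.laplacian_sub (f₁ := a ^ 2 • Δ φ) (hΔ.const_smul (a ^ 2)).contDiffAt
        hφ₂.contDiffAt,
      laplacian_smul _ hΔ.contDiffAt, lap_eq_laplacian hφ₂, lap_eq_laplacian hΔ, smul_eq_mul]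
    ring
  have hY {χ : E3 → ℝ} (hχ : ContDiff ℝ 2 χ) (hχc : HasCompactSupport χ) :
      Integrable fun x => yukawaKernel a x * χ x :=
    locallyIntegrable_yukawaKernel.integrable_smul_right_of_hasCompactSupport hχ.continuous hχc
  calc ∫ x, Ka a x * (-(lap φ x) + a ^ 2 * lap (lap φ) x)
      = -((a ^ 2)⁻¹ * ∫ x, yukawaKernel a x * (a ^ 2 * Δ φ x - φ x)) := by
        simp only [hlap]
        exact integral_Ka_mul_laplacian (ψ := a ^ 2 • Δ φ - φ) ((hΔ.const_smul (a ^ 2)).sub hφ₂)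
          (.sub (f := a ^ 2 • Δ φ) hΔc.smul_left hφc)
    _ = -((a ^ 2)⁻¹ *
          ((∫ x, a ^ 2 * (yukawaKernel a x * Δ φ x)) - ∫ x, yukawaKernel a x * φ x)) := by
        rw [← integral_sub ((hY hΔ hΔc).const_mul _) (hY hφ₂ hφc)]
        simp only [mul_sub, mul_left_comm]
    _ = 4 * π * φ 0 := by
        rw [integral_const_mul, integral_yukawaKernel_mul_laplacian hφ₂ hφc]
        field_simp
        ring

end Yukawa

/-- Fundamental solution of the Bopp–Podolsky operator, distributional form:
for every smooth compactly supported `φ`,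
`∫ K_a(x) (-Δφ(x) + a² Δ²φ(x)) dx = 4π φ(0)`. -/
theorem boppPodolsky_fundamental_solution (a : ℝ) (ha : 0 < a)
    (φ : E3 → ℝ) (hφ : ContDiff ℝ (⊤ : ℕ∞) φ) (hφc : HasCompactSupport φ) :
    ∫ x, Ka a x * (-(lap φ x) + a ^ 2 * lap (lap φ) x) = 4 * Real.pi * φ 0 :=
  boppPodolsky_fundamental_solution_general a ha.ne' φ (contDiff_infty.1 hφ 4) hφc
end
end

section
/- (Convolution identity relating the Coulomb, Yukawa and Bopp–Podolsky potentials.) Let a > 0. For every x ∈ ℝ³ with x ≠ 0, ∫_{ℝ³} exp(-‖y‖/a) / (‖x - y‖ · ‖y‖) dy = 4π a² (1 - exp(-‖x‖/a)) / ‖x‖. -/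
open MeasureTheory Real
open scoped ENNReal

noncomputable section

/-!
The proof is Newton's shell theorem. In three dimensions the volume element in the variables
`r = ‖y‖` and `z = ⟪u, y⟫`, for a unit vector `u`, is `2π r dr dz` on `|z| < r` (Archimedes'
hat-box theorem). With `x = ‖x‖ • u` we have `‖x - y‖² = r² + ‖x‖² - 2 ‖x‖ z`, so the `z`-integral
of `1 / ‖x - y‖` is elementary and equals `2 r / max r ‖x‖`. What remains is a radial integral,
split at `r = ‖x‖`.
-/

open Set

lemma image_sqrt_sq_add_sq_Ioi (z : ℝ) : (fun ρ ↦ √(z ^ 2 + ρ ^ 2)) '' Ioi 0 = Ioi |z| := by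
  ext r
  constructor
  · rintro ⟨ρ, hρ : 0 < ρ, rfl⟩
    exact lt_sqrt_of_sq_lt (by rw [sq_abs]; linarith [pow_pos hρ 2])
  · intro (hr : |z| < r)
    have hzr : z ^ 2 < r ^ 2 := sq_lt_sq.2 (hr.trans_le (le_abs_self r))
    refine ⟨√(r ^ 2 - z ^ 2), sqrt_pos.2 (sub_pos.2 hzr), ?_⟩
    simp only [sq_sqrt (sub_pos.2 hzr).le, add_sub_cancel]
    exact sqrt_sq ((abs_nonneg z).trans hr.le)

lemma lintegral_Ioi_mul_comp_sqrt_sq_add_sq (g : ℝ → ℝ≥0∞) (z : ℝ) :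
    ∫⁻ ρ in Ioi 0, ENNReal.ofReal ρ * g √(z ^ 2 + ρ ^ 2) =
      ∫⁻ r in Ioi |z|, ENNReal.ofReal r * g r := by
  have hpos {ρ : ℝ} (hρ : ρ ∈ Ioi 0) : 0 < z ^ 2 + ρ ^ 2 := by
    have : 0 < ρ := hρ
    positivity
  have hderiv : ∀ ρ ∈ Ioi (0 : ℝ), HasDerivWithinAt (fun ρ ↦ √(z ^ 2 + ρ ^ 2))
      (ρ / √(z ^ 2 + ρ ^ 2)) (Ioi 0) ρ := fun ρ hρ ↦ by
    refine ((((hasDerivAt_pow 2 ρ).const_add (z ^ 2)).sqrt (hpos hρ).ne').congr_deriv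
      ?_).hasDerivWithinAt
    field_simp
    norm_num
  have hinj : InjOn (fun ρ ↦ √(z ^ 2 + ρ ^ 2)) (Ioi 0) := fun ρ hρ σ hσ h ↦ by
    have : ρ ^ 2 = σ ^ 2 := by linarith [(sqrt_inj (hpos hρ).le (hpos hσ).le).1 h]
    exact (pow_left_inj₀ (le_of_lt hρ) (le_of_lt hσ) two_ne_zero).1 this
  rw [← image_sqrt_sq_add_sq_Ioi,
    lintegral_image_eq_lintegral_abs_deriv_mul measurableSet_Ioi hderiv hinj]
  refine setLIntegral_congr_fun measurableSet_Ioi fun ρ hρ ↦ ?_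
  have hsqrt : 0 < √(z ^ 2 + ρ ^ 2) := sqrt_pos.2 (hpos hρ)
  rw [← mul_assoc, ← ENNReal.ofReal_mul (abs_nonneg _),
    abs_of_nonneg (div_nonneg (le_of_lt hρ) hsqrt.le), div_mul_cancel₀ _ hsqrt.ne']

lemma lintegral_comp_sq_add_sq {g : ℝ → ℝ≥0∞} (hg : Measurable g) :
    ∫⁻ w : ℝ × ℝ, g (w.1 ^ 2 + w.2 ^ 2) =
      ENNReal.ofReal (2 * π) * ∫⁻ ρ in Ioi 0, ENNReal.ofReal ρ * g (ρ ^ 2) := by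
  have hpolar (p : ℝ × ℝ) : ENNReal.ofReal p.1 •
      g ((polarCoord.symm p).1 ^ 2 + (polarCoord.symm p).2 ^ 2) =
        ENNReal.ofReal p.1 * g (p.1 ^ 2) * 1 := by
    rw [polarCoord_symm_apply, smul_eq_mul, mul_one]
    congr 2
    linear_combination p.1 ^ 2 * sin_sq_add_cos_sq p.2
  have hangle : ∫⁻ _ in Ioo (-π) π, (1 : ℝ≥0∞) = ENNReal.ofReal (2 * π) := by
    rw [setLIntegral_one, Real.volume_Ioo]
    ring_nf
  rw [← lintegral_comp_polarCoord_symm]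
  simp_rw [hpolar]
  rw [polarCoord_target, Measure.volume_eq_prod, ← Measure.prod_restrict,
    lintegral_prod_mul (f := fun ρ ↦ ENNReal.ofReal ρ * g (ρ ^ 2)) (g := fun _ ↦ 1)
      (by fun_prop) (by fun_prop), hangle, mul_comm]

lemma lintegral_lintegral_Ioi_abs_swap {G : ℝ → ℝ → ℝ≥0∞} (hG : Measurable G.uncurry) :
    ∫⁻ z, ∫⁻ r in Ioi |z|, G r z = ∫⁻ r in Ioi 0, ∫⁻ z in Ioo (-r) r, G r z := by
  have hcone : MeasurableSet {p : ℝ × ℝ | |p.2| < p.1} :=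
    measurableSet_lt (by fun_prop) (by fun_prop)
  calc ∫⁻ z, ∫⁻ r in Ioi |z|, G r z
      = ∫⁻ z, ∫⁻ r, {p : ℝ × ℝ | |p.2| < p.1}.indicator G.uncurry (r, z) := by
        refine lintegral_congr fun z ↦ ?_
        rw [← lintegral_indicator measurableSet_Ioi]
        rfl
    _ = ∫⁻ r, ∫⁻ z, {p : ℝ × ℝ | |p.2| < p.1}.indicator G.uncurry (r, z) :=
        lintegral_lintegral_swap ((hG.indicator hcone).comp measurable_swap).aemeasurable
    _ = ∫⁻ r, ∫⁻ z in Ioo (-r) r, G r z := by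
        refine lintegral_congr fun r ↦ ?_
        rw [← lintegral_indicator measurableSet_Ioo]
        simp only [indicator, mem_ofPred_eq, mem_Ioo, abs_lt, Function.uncurry_apply_pair]
    _ = ∫⁻ r in Ioi 0, ∫⁻ z in Ioo (-r) r, G r z := by
        refine (setLIntegral_eq_of_support_subset fun r hr ↦ ?_).symm
        contrapose! hr
        have : Ioo (-r) r = ∅ := Ioo_eq_empty (by grind)
        simp [this]

lemma lintegral_Ioo_ofReal_deriv_of_nonneg {g g' : ℝ → ℝ} {a b : ℝ} (hab : a ≤ b)
    (hcont : ContinuousOn g (Icc a b)) (hderiv : ∀ t ∈ Ioo a b, HasDerivAt g (g' t) t)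
    (hpos : ∀ t ∈ Ioo a b, 0 ≤ g' t) :
    ∫⁻ t in Ioo a b, ENNReal.ofReal (g' t) = ENNReal.ofReal (g b - g a) := by
  have hint : IntegrableOn g' (Ioc a b) :=
    intervalIntegral.integrableOn_deriv_of_nonneg hcont hderiv hpos
  rw [← ofReal_integral_eq_lintegral_ofReal (hint.mono_set Ioo_subset_Ioc_self)
      (ae_restrict_of_forall_mem measurableSet_Ioo hpos),
    ← integral_Ioc_eq_integral_Ioo, ← intervalIntegral.integral_of_le hab,
    intervalIntegral.integral_eq_sub_of_hasDerivAt_of_le hab hcont hderiv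
      ((intervalIntegrable_iff_integrableOn_Ioc_of_le hab).2 hint)]

lemma lintegral_Ioo_inv_sqrt_sq_add_sq_sub {r R : ℝ} (hr : 0 < r) (hR : 0 ≤ R) :
    ∫⁻ z in Ioo (-r) r, ENNReal.ofReal (√(r ^ 2 + R ^ 2 - 2 * R * z))⁻¹ =
      ENNReal.ofReal (2 * r / max r R) := by
  rcases hR.eq_or_lt with rfl | hR
  · have hconst : r⁻¹ * (r + r) = 2 * r / r := by ring
    simp [sqrt_sq hr.le, ← ENNReal.ofReal_mul, hr.le, hconst]
  have hpos : ∀ z ∈ Ioo (-r) r, 0 < r ^ 2 + R ^ 2 - 2 * R * z := fun z hz ↦ by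
    nlinarith [sq_nonneg (r - R), mul_pos hR (sub_pos.2 hz.2)]
  have hderiv : ∀ z ∈ Ioo (-r) r,
      HasDerivAt (fun z ↦ -√(r ^ 2 + R ^ 2 - 2 * R * z) / R) (√(r ^ 2 + R ^ 2 - 2 * R * z))⁻¹ z :=
    fun z hz ↦ by
      have := (((hasDerivAt_id z).const_mul (2 * R)).const_sub (r ^ 2 + R ^ 2)).sqrt (hpos z hz).ne'
      refine (this.neg.div_const R).congr_deriv ?_
      field_simp
      simp
  -- For `r = R` the integrand is unbounded near `z = r`: only the antiderivative extends to `±r`.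
  have hright : r ^ 2 + R ^ 2 - 2 * R * r = (r - R) ^ 2 := by ring
  have hleft : r ^ 2 + R ^ 2 - 2 * R * -r = (r + R) ^ 2 := by ring
  rw [lintegral_Ioo_ofReal_deriv_of_nonneg (by linarith) (by fun_prop) hderiv
    fun z _ ↦ inv_nonneg.2 (sqrt_nonneg _), hright, hleft, sqrt_sq_eq_abs,
    sqrt_sq (by positivity)]
  congr 1
  rcases le_total r R with hrR | hRr
  · rw [abs_of_nonpos (sub_nonpos.2 hrR), max_eq_right hrR]
    ring
  · rw [abs_of_nonneg (sub_nonneg.2 hRr), max_eq_left hRr]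
    field_simp
    ring

lemma exists_norm_eq_one_and_norm_smul_eq {E : Type*} [NormedAddCommGroup E] [NormedSpace ℝ E]
    [Nontrivial E] (x : E) : ∃ u : E, ‖u‖ = 1 ∧ ‖x‖ • u = x := by
  rcases eq_or_ne x 0 with rfl | hx
  · obtain ⟨u, hu⟩ := exists_norm_eq E zero_le_one
    exact ⟨u, hu, by simp⟩
  · exact ⟨‖x‖⁻¹ • x, norm_smul_inv_norm hx, smul_inv_smul₀ (norm_ne_zero_iff.2 hx) x⟩

lemma norm_smul_sub_of_norm_eq_one {E : Type*} [NormedAddCommGroup E] [InnerProductSpace ℝ E]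
    (R : ℝ) {u : E} (hu : ‖u‖ = 1) (y : E) :
    ‖R • u - y‖ = √(‖y‖ ^ 2 + R ^ 2 - 2 * R * inner ℝ u y) := by
  rw [← sqrt_sq (norm_nonneg (R • u - y)), norm_sub_sq_real, norm_smul, inner_smul_left, hu,
    mul_one, norm_eq_abs, sq_abs, RCLike.conj_to_real]
  ring_nf

lemma exists_orthonormalBasis_apply_eq {𝕜 E ι : Type*} [RCLike 𝕜] [NormedAddCommGroup E]
    [InnerProductSpace 𝕜 E] [FiniteDimensional 𝕜 E] [Fintype ι]
    (hE : Module.finrank 𝕜 E = Fintype.card ι) (i : ι) {u : E} (hu : ‖u‖ = 1) :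
    ∃ b : OrthonormalBasis ι 𝕜 E, b i = u := by
  have horth : Orthonormal 𝕜 (({i} : Set ι).domRestrict fun _ ↦ u) :=
    ⟨fun _ ↦ hu, fun j k hjk ↦ (hjk (Subsingleton.elim j k)).elim⟩
  obtain ⟨b, hb⟩ := horth.exists_orthonormalBasis_extension_of_card_eq hE
  exact ⟨b, hb i rfl⟩

section InnerProductSpace

variable {E : Type*} [NormedAddCommGroup E] [InnerProductSpace ℝ E] [FiniteDimensional ℝ E]
  [MeasurableSpace E] [BorelSpace E]

lemma lintegral_norm_inner_eq_lintegral_prod (hE : Module.finrank ℝ E = 3) {u : E} (hu : ‖u‖ = 1)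
    {F : ℝ → ℝ → ℝ≥0∞} (hF : Measurable F.uncurry) :
    ∫⁻ y : E, F ‖y‖ (inner ℝ u y) =
      ∫⁻ z : ℝ, ∫⁻ w : ℝ × ℝ, F √(z ^ 2 + (w.1 ^ 2 + w.2 ^ 2)) z := by
  obtain ⟨b, rfl⟩ := exists_orthonormalBasis_apply_eq (ι := Fin 3) (by simpa using hE) 0 hu
  let G : ℝ × ℝ × ℝ → ℝ≥0∞ := fun p ↦ F √(p.1 ^ 2 + (p.2.1 ^ 2 + p.2.2 ^ 2)) p.1
  have hG : Measurable G :=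
    hF.comp (f := fun p : ℝ × ℝ × ℝ ↦ (√(p.1 ^ 2 + (p.2.1 ^ 2 + p.2.2 ^ 2)), p.1)) (by fun_prop)
  have hcoord : MeasurePreserving fun y : E ↦ (b.repr y 0, b.repr y 1, b.repr y 2) :=
    ((MeasurePreserving.id volume).prod (volume_preserving_finTwoArrow ℝ)).comp
      ((volume_preserving_piFinSuccAbove (fun _ : Fin 3 ↦ ℝ) 0).comp
        ((PiLp.volume_preserving_ofLp (Fin 3)).comp b.measurePreserving_repr))
  have hnorm (y : E) : ‖y‖ = √(b.repr y 0 ^ 2 + (b.repr y 1 ^ 2 + b.repr y 2 ^ 2)) := by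
    rw [← b.repr.norm_map, EuclideanSpace.norm_eq]
    simp only [norm_eq_abs, sq_abs, Fin.sum_univ_three, add_assoc]
  calc ∫⁻ y : E, F ‖y‖ (inner ℝ (b 0) y)
      = ∫⁻ y : E, G (b.repr y 0, b.repr y 1, b.repr y 2) := by
        simp_rw [hnorm, ← b.repr_apply_apply]
        rfl
    _ = ∫⁻ p, G p := hcoord.lintegral_comp hG
    _ = ∫⁻ z : ℝ, ∫⁻ w : ℝ × ℝ, G (z, w) := lintegral_prod _ hG.aemeasurable

lemma lintegral_norm_inner (hE : Module.finrank ℝ E = 3) {u : E} (hu : ‖u‖ = 1)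
    {F : ℝ → ℝ → ℝ≥0∞} (hF : Measurable F.uncurry) :
    ∫⁻ y : E, F ‖y‖ (inner ℝ u y) =
      ENNReal.ofReal (2 * π) * ∫⁻ r in Ioi 0, ENNReal.ofReal r * ∫⁻ z in Ioo (-r) r, F r z := by
  have hslice (z : ℝ) : ∫⁻ w : ℝ × ℝ, F √(z ^ 2 + (w.1 ^ 2 + w.2 ^ 2)) z =
      ENNReal.ofReal (2 * π) * ∫⁻ r in Ioi |z|, ENNReal.ofReal r * F r z := by
    rw [← lintegral_Ioi_mul_comp_sqrt_sq_add_sq (F · z),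
      ← lintegral_comp_sq_add_sq (g := fun t ↦ F √(z ^ 2 + t) z)
        (hF.comp (f := fun t ↦ (√(z ^ 2 + t), z)) (by fun_prop))]
  have hrF : Measurable (Function.uncurry fun r z ↦ ENNReal.ofReal r * F r z) :=
    (ENNReal.measurable_ofReal.comp measurable_fst).mul hF
  rw [lintegral_norm_inner_eq_lintegral_prod hE hu hF]
  simp_rw [hslice]
  rw [lintegral_const_mul' _ _ ENNReal.ofReal_ne_top, lintegral_lintegral_Ioi_abs_swap hrF]
  simp_rw [lintegral_const_mul' _ _ ENNReal.ofReal_ne_top]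

lemma lintegral_norm_mul_inv_norm_sub (hE : Module.finrank ℝ E = 3) {f : ℝ → ℝ≥0∞}
    (hf : Measurable f) (x : E) :
    ∫⁻ y, f ‖y‖ * ENNReal.ofReal ‖x - y‖⁻¹ =
      ENNReal.ofReal (4 * π) * ∫⁻ r in Ioi 0, ENNReal.ofReal (r ^ 2 / max r ‖x‖) * f r := by
  have : Nontrivial E := Module.nontrivial_of_finrank_pos (R := ℝ) (by lia)
  obtain ⟨u, hu, hux⟩ := exists_norm_eq_one_and_norm_smul_eq x
  have hdist (y : E) : ‖x - y‖ = √(‖y‖ ^ 2 + ‖x‖ ^ 2 - 2 * ‖x‖ * inner ℝ u y) := by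
    rw [← norm_smul_sub_of_norm_eq_one ‖x‖ hu, hux]
  have hF : Measurable (Function.uncurry fun r z ↦
      f r * ENNReal.ofReal (√(r ^ 2 + ‖x‖ ^ 2 - 2 * ‖x‖ * z))⁻¹) := by
    unfold Function.uncurry
    fun_prop
  simp_rw [hdist]
  rw [lintegral_norm_inner hE hu hF, show 4 * π = 2 * π * 2 by ring,
    ENNReal.ofReal_mul two_pi_pos.le, mul_assoc,
    ← lintegral_const_mul' (ENNReal.ofReal 2) _ ENNReal.ofReal_ne_top]
  congr 1
  refine setLIntegral_congr_fun measurableSet_Ioi fun r (hr : 0 < r) ↦ ?_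
  rw [lintegral_const_mul _ (by fun_prop),
    lintegral_Ioo_inv_sqrt_sq_add_sq_sub hr (norm_nonneg x), mul_left_comm, mul_comm (f r),
    ← ENNReal.ofReal_mul hr.le, ← mul_assoc, ← ENNReal.ofReal_mul zero_le_two]
  ring_nf

lemma integral_norm_div_norm_sub (hE : Module.finrank ℝ E = 3) {f : ℝ → ℝ} (hf : Measurable f)
    (hf₀ : ∀ r, 0 ≤ r → 0 ≤ f r) (x : E) :
    ∫ y, f ‖y‖ / ‖x - y‖ = 4 * π * ∫ r in Ioi 0, r ^ 2 / max r ‖x‖ * f r := by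
  rw [integral_eq_lintegral_of_nonneg_ae
      (.of_forall fun y ↦ div_nonneg (hf₀ _ (norm_nonneg y)) (norm_nonneg _))
      (Measurable.aestronglyMeasurable (by fun_prop)),
    integral_eq_lintegral_of_nonneg_ae
      (ae_restrict_of_forall_mem measurableSet_Ioi fun r (hr : 0 < r) ↦
        mul_nonneg (by positivity) (hf₀ r hr.le))
      (Measurable.aestronglyMeasurable (by fun_prop))]
  simp_rw [div_eq_mul_inv (f _), ENNReal.ofReal_mul (hf₀ _ (norm_nonneg _))]
  rw [lintegral_norm_mul_inv_norm_sub hE (f := fun r ↦ ENNReal.ofReal (f r)) (by fun_prop),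
    ENNReal.toReal_mul, ENNReal.toReal_ofReal (by positivity)]
  congr 2
  refine setLIntegral_congr_fun measurableSet_Ioi fun r (hr : 0 < r) ↦ ?_
  exact (ENNReal.ofReal_mul (by positivity)).symm

end InnerProductSpace

lemma integral_mul_exp_neg_div {a : ℝ} (ha : a ≠ 0) (b c : ℝ) :
    ∫ r in b..c, r * exp (-r / a) = a * (b + a) * exp (-b / a) - a * (c + a) * exp (-c / a) := by
  have hderiv (r : ℝ) : HasDerivAt (fun r ↦ -(a * (r + a) * exp (-r / a)))
      (r * exp (-r / a)) r := by
    have hexp := ((hasDerivAt_neg' r).div_const a).exp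
    refine ((((hasDerivAt_id' r).add_const a).const_mul a).mul hexp).neg.congr_deriv ?_
    field_simp
    ring
  rw [intervalIntegral.integral_eq_sub_of_hasDerivAt (fun r _ ↦ hderiv r)
    (Continuous.intervalIntegrable (by fun_prop) _ _)]
  ring

lemma integral_Ioi_mul_exp_neg_div_div_max {a R : ℝ} (ha : 0 < a) (hR : 0 < R) :
    ∫ r in Ioi 0, r * exp (-r / a) / max r R = a ^ 2 * (1 - exp (-R / a)) / R := by
  have hnear_eq : EqOn (fun r ↦ r * exp (-r / a) / max r R) (fun r ↦ r * exp (-r / a) / R)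
      (Ioc 0 R) := fun r hr ↦ by simp only [max_eq_right hr.2]
  have hfar_eq : EqOn (fun r ↦ r * exp (-r / a) / max r R) (fun r ↦ exp (-a⁻¹ * r)) (Ioi R) :=
    fun r (hr : R < r) ↦ by
      simp only [max_eq_left hr.le, mul_div_cancel_left₀ _ (hR.trans hr).ne']
      ring_nf
  have hneg : -a⁻¹ < 0 := neg_lt_zero.2 (inv_pos.2 ha)
  have hnear_integrable : IntegrableOn (fun r ↦ r * exp (-r / a) / max r R) (Ioc 0 R) :=
    ((Continuous.integrableOn_Icc (by fun_prop)).mono_set Ioc_subset_Icc_self).congr_fun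
      hnear_eq.symm measurableSet_Ioc
  have hfar_integrable : IntegrableOn (fun r ↦ r * exp (-r / a) / max r R) (Ioi R) :=
    (integrableOn_exp_mul_Ioi hneg R).congr_fun hfar_eq.symm measurableSet_Ioi
  have hnear : ∫ r in Ioc 0 R, r * exp (-r / a) / max r R =
      (a ^ 2 - a * (R + a) * exp (-R / a)) / R := by
    rw [setIntegral_congr_fun measurableSet_Ioc hnear_eq,
      ← intervalIntegral.integral_of_le hR.le, intervalIntegral.integral_div,
      integral_mul_exp_neg_div ha.ne', neg_zero, zero_div, exp_zero]
    ring
  have hfar : ∫ r in Ioi R, r * exp (-r / a) / max r R = a * exp (-R / a) := by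
    rw [setIntegral_congr_fun measurableSet_Ioi hfar_eq, integral_exp_mul_Ioi hneg,
      show -a⁻¹ * R = -R / a by ring]
    field_simp
  rw [← Ioc_union_Ioi_eq_Ioi hR.le, setIntegral_union (Ioc_disjoint_Ioi le_rfl) measurableSet_Ioi
    hnear_integrable hfar_integrable, hnear, hfar]
  field_simp
  ring

theorem coulomb_conv_yukawa_general {E : Type*} [NormedAddCommGroup E] [InnerProductSpace ℝ E]
    [FiniteDimensional ℝ E] [MeasurableSpace E] [BorelSpace E] (hE : Module.finrank ℝ E = 3)
    {a : ℝ} (ha : 0 < a) {x : E} (hx : x ≠ 0) :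
    ∫ y : E, exp (-‖y‖ / a) / (‖x - y‖ * ‖y‖) =
      4 * π * a ^ 2 * (1 - exp (-‖x‖ / a)) / ‖x‖ := by
  have hradial : ∀ r ∈ Ioi (0 : ℝ),
      r ^ 2 / max r ‖x‖ * (exp (-r / a) / r) = r * exp (-r / a) / max r ‖x‖ :=
    fun r (hr : 0 < r) ↦ by field_simp
  calc ∫ y : E, exp (-‖y‖ / a) / (‖x - y‖ * ‖y‖)
      = ∫ y : E, exp (-‖y‖ / a) / ‖y‖ / ‖x - y‖ := by
        simp_rw [div_div, mul_comm]
    _ = 4 * π * ∫ r in Ioi 0, r ^ 2 / max r ‖x‖ * (exp (-r / a) / r) :=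
        integral_norm_div_norm_sub hE (f := fun r ↦ exp (-r / a) / r) (by fun_prop)
          (fun r hr ↦ by positivity) x
    _ = 4 * π * ∫ r in Ioi 0, r * exp (-r / a) / max r ‖x‖ := by
        rw [setIntegral_congr_fun measurableSet_Ioi hradial]
    _ = 4 * π * a ^ 2 * (1 - exp (-‖x‖ / a)) / ‖x‖ := by
        rw [integral_Ioi_mul_exp_neg_div_div_max ha (norm_pos_iff.2 hx)]
        ring

/-- Convolution identity relating the Coulomb, Yukawa and Bopp–Podolsky potentials:
for `a > 0` and `x ≠ 0`,
`∫ exp(-‖y‖/a) / (‖x - y‖ ‖y‖) dy = 4π a² (1 - exp(-‖x‖/a)) / ‖x‖`. -/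
theorem coulomb_conv_yukawa (a : ℝ) (ha : 0 < a) (x : E3) (hx : x ≠ 0) :
    ∫ y : E3, Real.exp (-‖y‖ / a) / (‖x - y‖ * ‖y‖) =
      4 * Real.pi * a ^ 2 * (1 - Real.exp (-‖x‖ / a)) / ‖x‖ :=
  coulomb_conv_yukawa_general finrank_euclideanSpace_fin ha hx
end
end

section
/- (Distributional solution from convolution with the kernel.) Let K : ℝ³ → ℝ be defined by K(x) = (1 - exp(-‖x‖))/‖x‖ for x ≠ 0 and K(0) = 1. Let f : ℝ³ → [0,∞) be measurable and suppose ψ_f := K*f, defined by ψ_f(x) = ∫_{ℝ³} K(x - y) f(y) dy, is locally integrable on ℝ³. Then f is locally integrable and, for every smooth compactly supported test function φ : ℝ³ → ℝ, ∫_{ℝ³} ψ_f(x) ( -Δφ(x) + Δ²φ(x) ) dx = 4π ∫_{ℝ³} f(x) φ(x) dx; that is, ψ_f solves -Δψ + Δ²ψ = 4π f in the sense of distributions. -/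
open MeasureTheory Real
open scoped ENNReal Classical

noncomputable section

/-- Bopp–Podolsky kernel with `a = 1`. -/
def K1 (x : E3) : ℝ := if x = 0 then 1 else (1 - Real.exp (-‖x‖)) / ‖x‖

/-- Bopp–Podolsky energy as an iterated lower integral, valued in `[0,∞]`. -/
def Vlin (f g : E3 → ℝ) : ℝ≥0∞ :=
  ∫⁻ x, ∫⁻ y, ENNReal.ofReal (K1 (x - y) * f x * g y)

/-- Bopp–Podolsky energy as an iterated Bochner integral. -/
def Vr (f g : E3 → ℝ) : ℝ := ∫ x, ∫ y, K1 (x - y) * f x * g y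

/-- `G` is the weak gradient of `u`. -/
def IsWeakGradient (u : E3 → ℝ) (G : E3 → E3) : Prop :=
  ∀ φ : E3 → ℝ, ContDiff ℝ (⊤ : ℕ∞) φ → HasCompactSupport φ → ∀ i : Fin 3,
    ∫ x, u x * fderiv ℝ φ x (EuclideanSpace.single i 1) = -∫ x, G x i * φ x

/-- `h` is the weak Laplacian of `u`. -/
def IsWeakLaplacian (u : E3 → ℝ) (h : E3 → ℝ) : Prop :=
  ∀ φ : E3 → ℝ, ContDiff ℝ (⊤ : ℕ∞) φ → HasCompactSupport φ →
    ∫ x, u x * lap φ x = ∫ x, h x * φ x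

/-! The kernel is the difference `1/‖x‖ - e^{-‖x‖}/‖x‖` of the Coulomb and Yukawa potentials. For
either mass `m ∈ {0, 1}`, replacing `‖x‖` by `√(‖x‖² + ε²)` gives a smooth function `u` for which
`-Δu + m² u` is an explicit approximate identity of total mass `4π`. Integrating by parts and
letting `ε → 0` identifies the two fundamental solutions, and a combination of them gives
`(-Δ + Δ²) K = 4π δ`. The kernel is comparable to `1/(1 + ‖x‖)`, so `K (x - y)` and `K (x₀ - y)` are
comparable in `y`, locally uniformly in `x`. Convergence of `K * |f|` at a single point `x₀` hence
gives both the local integrability of `f` and the use of Fubini's theorem that transfers the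
equation from `K` to `K * f`. -/

open Filter Metric Set Module
open scoped Topology RealInnerProductSpace

section SoftNorm

variable {E : Type*} [NormedAddCommGroup E]

/-- The softened norm `√(‖x‖² + ε²)`, a regularisation of `‖x‖` that is smooth on inner product
spaces for `ε ≠ 0`. -/
def softNorm (ε : ℝ) (x : E) : ℝ := √(‖x‖ ^ 2 + ε ^ 2)

@[fun_prop]
lemma continuous_uncurry_softNorm : Continuous fun p : ℝ × E => softNorm p.1 p.2 := by
  unfold softNorm
  fun_prop

@[fun_prop]
lemma continuous_softNorm (ε : ℝ) : Continuous fun x : E => softNorm ε x := by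
  unfold softNorm
  fun_prop

lemma softNorm_zero_left (x : E) : softNorm 0 x = ‖x‖ := by
  simp [softNorm]

lemma softNorm_nonneg (ε : ℝ) (x : E) : 0 ≤ softNorm ε x := sqrt_nonneg _

lemma softNorm_pos {ε : ℝ} (hε : ε ≠ 0) (x : E) : 0 < softNorm ε x := by
  unfold softNorm
  positivity

lemma sq_softNorm (ε : ℝ) (x : E) : softNorm ε x ^ 2 = ‖x‖ ^ 2 + ε ^ 2 :=
  sq_sqrt (by positivity)

lemma norm_le_softNorm (ε : ℝ) (x : E) : ‖x‖ ≤ softNorm ε x :=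
  le_sqrt_of_sq_le (le_add_of_nonneg_right (sq_nonneg ε))

lemma softNorm_smul [NormedSpace ℝ E] {ε : ℝ} (hε : 0 ≤ ε) (x : E) :
    softNorm ε (ε • x) = ε * softNorm 1 x := by
  rw [softNorm, norm_smul, norm_of_nonneg hε,
    show (ε * ‖x‖) ^ 2 + ε ^ 2 = ε ^ 2 * (‖x‖ ^ 2 + 1 ^ 2) by ring,
    sqrt_mul (sq_nonneg ε), sqrt_sq hε, softNorm]

end SoftNorm

section RadialFunctions

variable {E : Type*} [NormedAddCommGroup E] [InnerProductSpace ℝ E] {ε : ℝ} {g g₁ g₂ : ℝ → ℝ}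

lemma contDiff_softNorm {n : WithTop ℕ∞} (hε : ε ≠ 0) :
    ContDiff ℝ n fun x : E => softNorm ε x :=
  ((contDiff_norm_sq ℝ).add contDiff_const).sqrt fun _ => by positivity

lemma hasFDerivAt_softNorm (hε : ε ≠ 0) (x : E) :
    HasFDerivAt (softNorm ε) ((softNorm ε x)⁻¹ • innerSL ℝ x) x := by
  have h := ((hasStrictFDerivAt_norm_sq x).hasFDerivAt.add_const (ε ^ 2)).sqrt (by positivity)
  convert! h using 1
  ext v
  simp only [softNorm, smul_apply, innerSL_apply_apply, smul_eq_mul,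
    nsmul_eq_mul]
  field_simp
  norm_num

lemma fderiv_comp_softNorm_apply (hε : ε ≠ 0) (hg : ∀ t > 0, HasDerivAt g (g₁ t * t) t)
    (x v : E) : fderiv ℝ (fun y => g (softNorm ε y)) x v = g₁ (softNorm ε x) * ⟪x, v⟫ := by
  have hpos := softNorm_pos hε x
  have h := (hg _ hpos).comp_hasFDerivAt x (hasFDerivAt_softNorm hε x)
  rw [show (fun y => g (softNorm ε y)) = g ∘ softNorm ε from rfl, h.fderiv]
  simp only [smul_apply, innerSL_apply_apply, smul_eq_mul]
  field_simp

lemma fderiv_fderiv_comp_softNorm_apply (hε : ε ≠ 0)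
    (hg : ∀ t > 0, HasDerivAt g (g₁ t * t) t) (hg₁ : ∀ t > 0, HasDerivAt g₁ (g₂ t * t) t)
    (x v : E) :
    fderiv ℝ (fun z => fderiv ℝ (fun y => g (softNorm ε y)) z v) x v =
      g₁ (softNorm ε x) * ‖v‖ ^ 2 + g₂ (softNorm ε x) * ⟪x, v⟫ ^ 2 := by
  have hd : DifferentiableAt ℝ (fun y => g₁ (softNorm ε y)) x :=
    (hg₁ _ (softNorm_pos hε x)).differentiableAt.comp x
      (hasFDerivAt_softNorm hε x).differentiableAt
  have hi : HasFDerivAt (fun y : E => ⟪y, v⟫) (innerSL ℝ v) x := by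
    simp_rw [real_inner_comm v]
    exact (innerSL ℝ v).hasFDerivAt
  simp_rw [fderiv_comp_softNorm_apply hε hg]
  rw [(hd.hasFDerivAt.fun_mul hi).fderiv]
  simp only [add_apply, smul_apply, innerSL_apply_apply,
    smul_eq_mul, real_inner_self_eq_norm_sq, fderiv_comp_softNorm_apply hε hg₁]
  ring

end RadialFunctions

section ApproximateIdentity

variable {E : Type*} [NormedAddCommGroup E] [NormedSpace ℝ E] [FiniteDimensional ℝ E]
  [MeasurableSpace E] [BorelSpace E] (μ : Measure E) [μ.IsAddHaarMeasure]

lemma hasDerivAt_div_sqrt_sq_add_one_pow (d : ℕ) (r : ℝ) :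
    HasDerivAt (fun r : ℝ => (r / √(r ^ 2 + 1)) ^ d)
      (d * (r ^ (d - 1) * (√(r ^ 2 + 1) ^ (d + 2))⁻¹)) r := by
  have hpos : 0 < r ^ 2 + 1 := by positivity
  have hsq : √(r ^ 2 + 1) ^ 2 = r ^ 2 + 1 := sq_sqrt hpos.le
  have hquot : HasDerivAt (fun r : ℝ => r / √(r ^ 2 + 1)) (√(r ^ 2 + 1) ^ 3)⁻¹ r := by
    convert! (hasDerivAt_id r).div (((hasDerivAt_pow 2 r).add_const 1).sqrt hpos.ne')
      (sqrt_pos.2 hpos).ne' using 1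
    simp only [id]
    field_simp
    linear_combination (-2 : ℝ) * hsq
  convert! hquot.pow d using 1
  rcases d with _ | d
  · simp
  · rw [Nat.add_sub_cancel, div_pow]
    field_simp
    ring

lemma tendsto_div_sqrt_sq_add_one_atTop :
    Tendsto (fun r : ℝ => r / √(r ^ 2 + 1)) atTop (𝓝 1) := by
  have hlim : Tendsto (fun r : ℝ => (√(1 + r⁻¹ ^ 2))⁻¹) atTop (𝓝 (√(1 + 0 ^ 2))⁻¹) :=
    ((tendsto_inv_atTop_zero.pow 2).const_add 1).sqrt.inv₀ (by simp)
  refine (by simpa using hlim : Tendsto _ _ (𝓝 (1 : ℝ))).congr' ?_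
  filter_upwards [eventually_gt_atTop 0] with r hr
  rw [show r ^ 2 + 1 = r ^ 2 * (1 + r⁻¹ ^ 2) by field_simp, sqrt_mul (sq_nonneg r), sqrt_sq hr.le]
  field_simp

lemma integral_inv_softNorm_one_pow [Nontrivial E] :
    ∫ z, (softNorm 1 z ^ (finrank ℝ E + 2))⁻¹ ∂μ = μ.real (ball (0 : E) 1) := by
  set d := finrank ℝ E
  have hd : d ≠ 0 := finrank_pos.ne'
  have hradial : ∫ r in Ioi (0 : ℝ), d * (r ^ (d - 1) * (√(r ^ 2 + 1) ^ (d + 2))⁻¹) = 1 := by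
    have hlim := tendsto_div_sqrt_sq_add_one_atTop.pow d
    rw [integral_Ioi_of_hasDerivAt_of_nonneg' (fun r _ => hasDerivAt_div_sqrt_sq_add_one_pow d r)
      (fun r (hr : 0 < r) => by positivity) hlim]
    simp [hd]
  have hpolar := integral_fun_norm_addHaar μ fun r : ℝ => (√(r ^ 2 + 1) ^ (d + 2))⁻¹
  rw [integral_const_mul] at hradial
  simp only [softNorm, one_pow]
  rw [hpolar, nsmul_eq_mul, smul_eq_mul, mul_left_comm]
  simp only [smul_eq_mul]
  rw [hradial, mul_one]

lemma integrable_inv_softNorm_one_pow [Nontrivial E] :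
    Integrable (fun z => (softNorm 1 z ^ (finrank ℝ E + 2))⁻¹) μ :=
  .of_integral_ne_zero <| by
    rw [integral_inv_softNorm_one_pow]
    exact (ENNReal.toReal_pos (measure_ball_pos μ 0 one_pos).ne' measure_ball_lt_top.ne).ne'

lemma integral_sq_div_softNorm_pow_mul {ε : ℝ} (hε : 0 < ε) (g : ℝ → E → ℝ) :
    ∫ x, ε ^ 2 / softNorm ε x ^ (finrank ℝ E + 2) * g (softNorm ε x) x ∂μ =
      ∫ z, (softNorm 1 z ^ (finrank ℝ E + 2))⁻¹ * g (ε * softNorm 1 z) (ε • z) ∂μ := by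
  have h := Measure.integral_comp_smul_of_nonneg μ
    (fun x => ε ^ 2 / softNorm ε x ^ (finrank ℝ E + 2) * g (softNorm ε x) x) ε (hR := hε.le)
  rw [smul_eq_mul, eq_inv_mul_iff_mul_eq₀ (by positivity), ← integral_const_mul] at h
  rw [← h]
  congr 1 with z
  have hpos := softNorm_pos one_ne_zero z
  rw [softNorm_smul hε.le, mul_pow]
  field_simp
  ring

lemma tendsto_integral_sq_div_softNorm_pow_mul [Nontrivial E] {g : ℝ → E → ℝ} {C : ℝ}
    (hg : Continuous (Function.uncurry g)) (hC : ∀ t ≥ 0, ∀ x, ‖g t x‖ ≤ C) :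
    Tendsto (fun ε => ∫ x, ε ^ 2 / softNorm ε x ^ (finrank ℝ E + 2) * g (softNorm ε x) x ∂μ)
      (𝓝[>] 0) (𝓝 (μ.real (ball (0 : E) 1) * g 0 0)) := by
  rw [← integral_inv_softNorm_one_pow, ← integral_mul_const]
  refine Tendsto.congr' (eventually_mem_nhdsWithin.mono fun ε hε =>
    (integral_sq_div_softNorm_pow_mul μ hε g).symm) ?_
  have hinv : Continuous fun z : E => (softNorm 1 z ^ (finrank ℝ E + 2))⁻¹ :=
    ((continuous_softNorm 1).pow _).inv₀ fun z => pow_ne_zero _ (softNorm_pos one_ne_zero z).ne'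
  refine tendsto_integral_filter_of_dominated_convergence
    (fun z => (softNorm 1 z ^ (finrank ℝ E + 2))⁻¹ * C)
    (.of_forall fun ε => ?_) ?_ ((integrable_inv_softNorm_one_pow μ).mul_const C)
    (.of_forall fun z => ?_)
  · have : Continuous fun z : E => g (ε * softNorm 1 z) (ε • z) :=
      hg.comp (f := fun z : E => (ε * softNorm 1 z, ε • z)) (by fun_prop)
    exact (hinv.mul this).aestronglyMeasurable
  · filter_upwards [self_mem_nhdsWithin] with ε (hε : 0 < ε)
    refine .of_forall fun z => ?_
    have hpos := softNorm_nonneg 1 z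
    rw [norm_mul, norm_of_nonneg (by positivity)]
    gcongr
    exact hC _ (by positivity) _
  · have : Continuous fun ε : ℝ => g (ε * softNorm 1 z) (ε • z) :=
      hg.comp (f := fun ε : ℝ => (ε * softNorm 1 z, ε • z)) (by fun_prop)
    simpa using ((this.tendsto 0).mono_left nhdsWithin_le_nhds).const_mul _

end ApproximateIdentity

section IntegrationByParts

variable {E : Type*} [NormedAddCommGroup E] [NormedSpace ℝ E]

lemma contDiff_fderiv_apply {m n : WithTop ℕ∞} {u : E → ℝ} (hu : ContDiff ℝ n u)
    (hmn : m + 1 ≤ n) (v : E) : ContDiff ℝ m fun x => fderiv ℝ u x v :=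
  (hu.fderiv_right hmn).clm_apply contDiff_const

variable [FiniteDimensional ℝ E] [MeasurableSpace E] [BorelSpace E] {μ : Measure E}
  [μ.IsAddHaarMeasure] {u φ : E → ℝ}

lemma integral_mul_fderiv_apply_of_hasCompactSupport (hu : ContDiff ℝ 1 u) (hφ : ContDiff ℝ 1 φ)
    (hφc : HasCompactSupport φ) (v : E) :
    ∫ x, u x * fderiv ℝ φ x v ∂μ = -∫ x, fderiv ℝ u x v * φ x ∂μ := by
  have hu' := (contDiff_fderiv_apply (m := 0) hu (by simp) v).continuous
  have hφ' := (contDiff_fderiv_apply (m := 0) hφ (by simp) v).continuous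
  exact integral_mul_fderiv_eq_neg_fderiv_mul_of_integrable
    ((hu'.mul hφ.continuous).integrable_of_hasCompactSupport hφc.mul_left)
    ((hu.continuous.mul hφ').integrable_of_hasCompactSupport (hφc.fderiv_apply ℝ v).mul_left)
    ((hu.continuous.mul hφ.continuous).integrable_of_hasCompactSupport hφc.mul_left)
    (fun x _ => hu.differentiable one_ne_zero x) (fun x _ => hφ.differentiable one_ne_zero x)

lemma integral_mul_fderiv_fderiv_apply_of_hasCompactSupport (hu : ContDiff ℝ 2 u)
    (hφ : ContDiff ℝ 2 φ) (hφc : HasCompactSupport φ) (v : E) :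
    ∫ x, u x * fderiv ℝ (fun y => fderiv ℝ φ y v) x v ∂μ =
      ∫ x, fderiv ℝ (fun y => fderiv ℝ u y v) x v * φ x ∂μ := by
  have hu' : ContDiff ℝ 1 fun x => fderiv ℝ u x v := contDiff_fderiv_apply hu (by norm_num) v
  have hφ' : ContDiff ℝ 1 fun x => fderiv ℝ φ x v := contDiff_fderiv_apply hφ (by norm_num) v
  rw [integral_mul_fderiv_apply_of_hasCompactSupport (hu.of_le one_le_two) hφ'
      (hφc.fderiv_apply ℝ v),
    integral_mul_fderiv_apply_of_hasCompactSupport hu' (hφ.of_le one_le_two) hφc, neg_neg]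

end IntegrationByParts

section Laplacian

variable {u φ : E3 → ℝ}

lemma contDiff_lap {m n : WithTop ℕ∞} (hφ : ContDiff ℝ n φ) (hmn : m + 2 ≤ n) :
    ContDiff ℝ m (lap φ) :=
  ContDiff.sum fun _ _ => contDiff_fderiv_apply
    (contDiff_fderiv_apply hφ (by rwa [add_assoc, one_add_one_eq_two]) _) le_rfl _

lemma continuous_lap (hφ : ContDiff ℝ 2 φ) : Continuous (lap φ) :=
  (contDiff_lap (m := 0) hφ (by simp)).continuous

lemma hasCompactSupport_lap (hφ : HasCompactSupport φ) : HasCompactSupport (lap φ) := by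
  have h (i : Fin 3) := (hφ.fderiv_apply ℝ (EuclideanSpace.single i 1)).fderiv_apply ℝ
    (EuclideanSpace.single i 1)
  unfold lap
  simp only [Fin.sum_univ_three]
  exact ((h 0).add (h 1)).add (h 2)

lemma integral_mul_lap_eq_integral_lap_mul (hu : ContDiff ℝ 2 u) (hφ : ContDiff ℝ 2 φ)
    (hφc : HasCompactSupport φ) : ∫ x, u x * lap φ x = ∫ x, lap u x * φ x := by
  have hcont {w : E3 → ℝ} (hw : ContDiff ℝ 2 w) (v : E3) :
      Continuous fun x => fderiv ℝ (fun y => fderiv ℝ w y v) x v :=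
    (contDiff_fderiv_apply (m := 0) (contDiff_fderiv_apply (m := 1) hw (by norm_num) v)
      (by simp) v).continuous
  simp only [lap, Finset.mul_sum, Finset.sum_mul]
  rw [integral_finsetSum, integral_finsetSum]
  · exact Finset.sum_congr rfl fun i _ =>
      integral_mul_fderiv_fderiv_apply_of_hasCompactSupport hu hφ hφc _
  · exact fun i _ => ((hcont hu _).mul hφ.continuous).integrable_of_hasCompactSupport hφc.mul_left
  · exact fun i _ => (hu.continuous.mul (hcont hφ _)).integrable_of_hasCompactSupport
      ((hφc.fderiv_apply ℝ _).fderiv_apply ℝ _).mul_left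

lemma lap_comp_add_right (φ : E3 → ℝ) (a x : E3) :
    lap (fun y => φ (y + a)) x = lap φ (x + a) := by
  simp only [lap, fderiv_comp_add_right]
  exact Finset.sum_congr rfl fun i _ => by
    rw [fderiv_comp_add_right (f := fun z => fderiv ℝ φ z (EuclideanSpace.single i 1))]

lemma lap_comp_softNorm {ε : ℝ} {g g₁ g₂ : ℝ → ℝ} (hε : ε ≠ 0)
    (hg : ∀ t > 0, HasDerivAt g (g₁ t * t) t) (hg₁ : ∀ t > 0, HasDerivAt g₁ (g₂ t * t) t)
    (x : E3) :
    lap (fun y => g (softNorm ε y)) x =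
      3 * g₁ (softNorm ε x) + g₂ (softNorm ε x) * ‖x‖ ^ 2 := by
  simp [lap, fderiv_fderiv_comp_softNorm_apply hε hg hg₁, Finset.sum_add_distrib,
    ← Finset.mul_sum, EuclideanSpace.inner_single_right, EuclideanSpace.norm_sq_eq]

end Laplacian

section Yukawa

/-- The radial profile `e^{-mt}/t` of the Yukawa potential of mass `m`; mass `0` gives the Coulomb
potential. -/
def yukawa (m t : ℝ) : ℝ := exp (-(m * t)) / t

/-- The factor `e^{-s}(s² + 3s + 3)` for which `(t⁻¹ d/dt)² (e^{-mt}/t) = yukawaFactor (m t) / t⁵`.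
It shapes the charge density that generates the softened Yukawa potential. -/
def yukawaFactor (s : ℝ) : ℝ := exp (-s) * (s ^ 2 + 3 * s + 3)

lemma yukawaFactor_zero : yukawaFactor 0 = 3 := by
  simp [yukawaFactor]

lemma abs_yukawaFactor_le {s : ℝ} (hs : 0 ≤ s) : |yukawaFactor s| ≤ 3 := by
  unfold yukawaFactor
  rw [abs_of_nonneg (by positivity), exp_neg, inv_mul_le_iff₀ (exp_pos s)]
  nlinarith [quadratic_le_exp_of_nonneg hs]

lemma hasDerivAt_exp_neg_mul (m t : ℝ) :
    HasDerivAt (fun t => exp (-(m * t))) (exp (-(m * t)) * -m) t := by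
  simpa using ((hasDerivAt_id t).const_mul m).neg.exp

lemma hasDerivAt_yukawa (m : ℝ) {t : ℝ} (ht : t ≠ 0) :
    HasDerivAt (yukawa m) (-(exp (-(m * t)) * (m * t + 1) / t ^ 3) * t) t := by
  convert! (hasDerivAt_exp_neg_mul m t).div (hasDerivAt_id t) ht using 1
  simp only [id]
  field_simp
  ring

lemma hasDerivAt_yukawa_slope (m : ℝ) {t : ℝ} (ht : t ≠ 0) :
    HasDerivAt (fun t => -(exp (-(m * t)) * (m * t + 1) / t ^ 3))
      (yukawaFactor (m * t) / t ^ 5 * t) t := by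
  have hlin : HasDerivAt (fun t => m * t + 1) m t := by
    simpa using ((hasDerivAt_id t).const_mul m).add_const 1
  convert! (((hasDerivAt_exp_neg_mul m t).fun_mul hlin).div (hasDerivAt_pow 3 t)
    (pow_ne_zero 3 ht)).neg using 1
  simp only [yukawaFactor, Nat.cast_ofNat, Nat.add_one_sub_one]
  field_simp
  ring

lemma contDiff_yukawa_softNorm {E : Type*} [NormedAddCommGroup E] [InnerProductSpace ℝ E]
    {n : WithTop ℕ∞} {ε : ℝ} (hε : ε ≠ 0) (m : ℝ) :
    ContDiff ℝ n fun x : E => yukawa m (softNorm ε x) :=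
  (contDiff_exp.comp (contDiff_const.mul (contDiff_softNorm hε)).neg).div (contDiff_softNorm hε)
    fun x => (softNorm_pos hε x).ne'

lemma lap_yukawa_softNorm {ε : ℝ} (hε : ε ≠ 0) (m : ℝ) (x : E3) :
    lap (fun y => yukawa m (softNorm ε y)) x =
      m ^ 2 * yukawa m (softNorm ε x) -
        ε ^ 2 / softNorm ε x ^ 5 * yukawaFactor (m * softNorm ε x) := by
  have hpos := softNorm_pos hε x
  rw [lap_comp_softNorm hε (fun t ht => hasDerivAt_yukawa m ht.ne')
    (fun t ht => hasDerivAt_yukawa_slope m ht.ne'),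
    show ‖x‖ ^ 2 = softNorm ε x ^ 2 - ε ^ 2 by rw [sq_softNorm, add_sub_cancel_right]]
  simp only [yukawa, yukawaFactor]
  field_simp
  ring

lemma abs_yukawa_le {m r t : ℝ} (hm : 0 ≤ m) (hr : 0 < r) (hrt : r ≤ t) :
    |yukawa m t| ≤ r⁻¹ := by
  have ht : 0 < t := hr.trans_le hrt
  rw [yukawa, abs_of_nonneg (by positivity), ← one_div]
  gcongr
  exact exp_le_one_iff.2 (neg_nonpos.2 (by positivity))

lemma locallyIntegrable_inv_norm {E : Type*} [NormedAddCommGroup E] [NormedSpace ℝ E]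
    [FiniteDimensional ℝ E] [MeasurableSpace E] [BorelSpace E] (μ : Measure E)
    [μ.IsAddHaarMeasure] (hE : 2 ≤ finrank ℝ E) : LocallyIntegrable (fun x : E => ‖x‖⁻¹) μ := by
  refine locallyIntegrable_of_norm_le_rpow (C := 1) (α := 1) (one_le_two.trans hE)
    (by exact_mod_cast hE) (.of_forall fun x => ?_) (by fun_prop)
  rw [rpow_neg_one, one_mul, norm_inv, norm_norm]

lemma ae_abs_yukawa_softNorm_le {m : ℝ} (hm : 0 ≤ m) (ε : ℝ) :
    ∀ᵐ x : E3, |yukawa m (softNorm ε x)| ≤ ‖x‖⁻¹ := by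
  filter_upwards [Measure.ae_ne volume 0] with x hx
  exact abs_yukawa_le hm (norm_pos_iff.2 hx) (norm_le_softNorm ε x)

variable {ψ φ : E3 → ℝ} {m : ℝ}

lemma integrable_yukawa_norm_mul (hm : 0 ≤ m) (hψ : Continuous ψ) (hψc : HasCompactSupport ψ) :
    Integrable fun x => yukawa m ‖x‖ * ψ x := by
  have hmeas : Measurable fun x : E3 => yukawa m ‖x‖ := by
    unfold yukawa
    fun_prop
  have hbound := ae_abs_yukawa_softNorm_le hm 0
  simp only [softNorm_zero_left] at hbound
  refine ((locallyIntegrable_inv_norm volume (by simp)).mono hmeas.aestronglyMeasurable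
    (hbound.mono fun x hx => ?_)).integrable_smul_right_of_hasCompactSupport hψ hψc
  rwa [norm_inv, norm_norm]

lemma tendsto_integral_yukawa_softNorm_mul (hm : 0 ≤ m) (hψ : Continuous ψ)
    (hψc : HasCompactSupport ψ) :
    Tendsto (fun ε => ∫ x, yukawa m (softNorm ε x) * ψ x) (𝓝[>] 0)
      (𝓝 (∫ x, yukawa m ‖x‖ * ψ x)) := by
  refine tendsto_integral_filter_of_dominated_convergence (fun x => ‖‖x‖⁻¹ * ψ x‖) ?_
    (.of_forall fun ε => ?_) ?_ ?_
  · filter_upwards [self_mem_nhdsWithin] with ε (hε : 0 < ε)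
    exact ((contDiff_yukawa_softNorm (n := 0) hε.ne' m).continuous.mul hψ).aestronglyMeasurable
  · filter_upwards [ae_abs_yukawa_softNorm_le hm ε] with x hx
    rw [norm_mul, norm_mul, norm_inv, norm_norm]
    gcongr
    exact hx
  · exact ((locallyIntegrable_inv_norm volume
      (by simp)).integrable_smul_right_of_hasCompactSupport hψ hψc).norm
  · filter_upwards [Measure.ae_ne volume 0] with x hx
    have hsoft : Tendsto (fun ε => softNorm ε x) (𝓝[>] 0) (𝓝 ‖x‖) := by
      have : Continuous fun ε => softNorm ε x := by fun_prop
      simpa only [softNorm_zero_left] using (this.tendsto 0).mono_left nhdsWithin_le_nhds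
    exact ((hasDerivAt_yukawa m (norm_ne_zero_iff.2 hx)).continuousAt.tendsto.comp
      hsoft).mul_const _

lemma integral_yukawa_softNorm_mul (m : ℝ) {ε : ℝ} (hε : ε ≠ 0) (hφ : ContDiff ℝ 2 φ)
    (hφc : HasCompactSupport φ) :
    ∫ x, yukawa m (softNorm ε x) * (m ^ 2 * φ x - lap φ x) =
      ∫ x, ε ^ 2 / softNorm ε x ^ 5 * (yukawaFactor (m * softNorm ε x) * φ x) := by
  have hu : ContDiff ℝ 2 fun x : E3 => yukawa m (softNorm ε x) := contDiff_yukawa_softNorm hε m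
  have hint {w η : E3 → ℝ} (hw : Continuous w) (hη : Continuous η) (hηc : HasCompactSupport η) :
      Integrable fun x => w x * η x :=
    (hw.mul hη).integrable_of_hasCompactSupport hηc.mul_left
  have hm2 := (hint hu.continuous hφ.continuous hφc).const_mul (m ^ 2)
  calc ∫ x, yukawa m (softNorm ε x) * (m ^ 2 * φ x - lap φ x)
      = (∫ x, m ^ 2 * (yukawa m (softNorm ε x) * φ x)) -
          ∫ x, yukawa m (softNorm ε x) * lap φ x := by
        rw [← integral_sub hm2 (hint hu.continuous (continuous_lap hφ)
          (hasCompactSupport_lap hφc))]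
        congr 1 with x
        ring
    _ = ∫ x, (m ^ 2 * (yukawa m (softNorm ε x) * φ x) -
          lap (fun y => yukawa m (softNorm ε y)) x * φ x) := by
        rw [integral_mul_lap_eq_integral_lap_mul hu hφ hφc, integral_sub hm2
          (hint (continuous_lap hu) hφ.continuous hφc)]
    _ = _ := by
        congr 1 with x
        rw [lap_yukawa_softNorm hε]
        ring

lemma integral_yukawa_norm_mul (hm : 0 ≤ m) (hφ : ContDiff ℝ 2 φ) (hφc : HasCompactSupport φ) :
    ∫ x, yukawa m ‖x‖ * (m ^ 2 * φ x - lap φ x) = 4 * π * φ 0 := by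
  obtain ⟨C, hC⟩ := hφc.exists_bound_of_continuous hφ.continuous
  have hfactor : Continuous yukawaFactor := by
    unfold yukawaFactor
    fun_prop
  have hsource := tendsto_integral_sq_div_softNorm_pow_mul (volume : Measure E3) (C := 3 * C)
    (g := fun t x => yukawaFactor (m * t) * φ x) (by have := hφ.continuous; fun_prop)
    fun t ht x => by
      rw [norm_mul]
      exact mul_le_mul (abs_yukawaFactor_le (by positivity)) (hC x) (norm_nonneg _) zero_le_three
  have hball : (volume : Measure E3).real (ball 0 1) * yukawaFactor (m * 0) = 4 * π := by
    rw [Measure.real, EuclideanSpace.volume_ball_fin_three, ENNReal.ofReal_one, one_pow,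
      one_mul, ENNReal.toReal_ofReal (by positivity), mul_zero, yukawaFactor_zero]
    ring
  rw [← mul_assoc, hball, finrank_euclideanSpace_fin] at hsource
  refine tendsto_nhds_unique (tendsto_integral_yukawa_softNorm_mul hm
    ((hφ.continuous.const_mul _).sub (continuous_lap hφ))
    ((hφc.mul_left (f := fun _ => m ^ 2)).sub (hasCompactSupport_lap hφc))) (hsource.congr' ?_)
  filter_upwards [self_mem_nhdsWithin] with ε (hε : 0 < ε)
  exact (integral_yukawa_softNorm_mul m hε.ne' hφ hφc).symm

end Yukawa


section Kernel

lemma K1_zero : K1 0 = 1 := if_pos rfl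

lemma K1_of_ne_zero {x : E3} (hx : x ≠ 0) : K1 x = (1 - exp (-‖x‖)) / ‖x‖ := if_neg hx

lemma K1_eq_yukawa_sub_yukawa {x : E3} (hx : x ≠ 0) : K1 x = yukawa 0 ‖x‖ - yukawa 1 ‖x‖ := by
  rw [K1_of_ne_zero hx, yukawa, yukawa, zero_mul, neg_zero, exp_zero, one_mul, sub_div]

@[fun_prop]
lemma measurable_K1 : Measurable K1 :=
  .ite (measurableSet_singleton 0) (by fun_prop) (by fun_prop)

lemma inv_one_add_norm_le_K1 (x : E3) : (1 + ‖x‖)⁻¹ ≤ K1 x := by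
  rcases eq_or_ne x 0 with rfl | hx
  · simp [K1_zero]
  have hpos := norm_pos_iff.2 hx
  have hexp : exp (-‖x‖) ≤ (1 + ‖x‖)⁻¹ := by
    rw [exp_neg, add_comm]
    exact inv_anti₀ (by positivity) (add_one_le_exp _)
  rw [K1_of_ne_zero hx, le_div_iff₀ hpos]
  calc (1 + ‖x‖)⁻¹ * ‖x‖ = 1 - (1 + ‖x‖)⁻¹ := by field_simp; ring
    _ ≤ 1 - exp (-‖x‖) := by gcongr

lemma K1_pos (x : E3) : 0 < K1 x :=
  (by positivity : 0 < (1 + ‖x‖)⁻¹).trans_le (inv_one_add_norm_le_K1 x)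

lemma K1_le_two_mul_inv_one_add_norm (x : E3) : K1 x ≤ 2 * (1 + ‖x‖)⁻¹ := by
  rcases eq_or_ne x 0 with rfl | hx
  · norm_num [K1_zero]
  have hpos := norm_pos_iff.2 hx
  have hexp_nonneg := exp_nonneg (-‖x‖)
  have hexp := add_one_le_exp (-‖x‖)
  rw [K1_of_ne_zero hx, ← div_eq_mul_inv, div_le_div_iff₀ hpos (by positivity)]
  nlinarith

lemma K1_sub_le_mul_K1_sub (x x₀ y : E3) :
    K1 (x - y) ≤ 2 * (1 + ‖x - x₀‖) * K1 (x₀ - y) := by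
  have htri : 1 + ‖x₀ - y‖ ≤ (1 + ‖x - x₀‖) * (1 + ‖x - y‖) := by
    have := norm_sub_le_norm_sub_add_norm_sub x₀ x y
    rw [norm_sub_rev x₀ x] at this
    nlinarith [norm_nonneg (x - x₀), norm_nonneg (x - y)]
  calc K1 (x - y) ≤ 2 * (1 + ‖x - y‖)⁻¹ := K1_le_two_mul_inv_one_add_norm _
    _ ≤ 2 * ((1 + ‖x - x₀‖) * (1 + ‖x₀ - y‖)⁻¹) := by
        gcongr
        rw [← div_eq_mul_inv, inv_le_iff_one_le_mul₀ (by positivity)]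
        rwa [div_mul_eq_mul_div, one_le_div₀ (by positivity)]
    _ ≤ 2 * (1 + ‖x - x₀‖) * K1 (x₀ - y) := by
        rw [mul_assoc]
        gcongr
        exact inv_one_add_norm_le_K1 _

variable {φ : E3 → ℝ}

lemma integral_K1_mul (hφ : ContDiff ℝ 4 φ) (hφc : HasCompactSupport φ) :
    ∫ x, K1 x * (-(lap φ x) + lap (lap φ) x) = 4 * π * φ 0 := by
  have hφ₂ : ContDiff ℝ 2 φ := hφ.of_le (by norm_num)
  have hΔ : ContDiff ℝ 2 (lap φ) := contDiff_lap hφ (by norm_num)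
  have hΔc := hasCompactSupport_lap hφc
  have hint {m : ℝ} (hm : 0 ≤ m) {ψ : E3 → ℝ} (hψ : ContDiff ℝ 2 ψ) (hψc : HasCompactSupport ψ) :
      Integrable fun x => yukawa m ‖x‖ * (m ^ 2 * ψ x - lap ψ x) :=
    integrable_yukawa_norm_mul hm ((hψ.continuous.const_mul _).sub (continuous_lap hψ))
      ((hψc.mul_left (f := fun _ => m ^ 2)).sub (hasCompactSupport_lap hψc))
  calc ∫ x, K1 x * (-(lap φ x) + lap (lap φ) x)
      = ∫ x, (yukawa 0 ‖x‖ * (0 ^ 2 * φ x - lap φ x) -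
          yukawa 0 ‖x‖ * (0 ^ 2 * lap φ x - lap (lap φ) x) +
          yukawa 1 ‖x‖ * (1 ^ 2 * lap φ x - lap (lap φ) x)) := by
        refine integral_congr_ae ((Measure.ae_ne volume 0).mono fun x hx => ?_)
        dsimp only
        rw [K1_eq_yukawa_sub_yukawa hx]
        ring
    _ = 4 * π * φ 0 - 4 * π * lap φ 0 + 4 * π * lap φ 0 := by
        have h₁ := hint le_rfl hφ₂ hφc
        have h₂ := hint le_rfl hΔ hΔc
        refine (integral_add (h₁.sub h₂) (hint zero_le_one hΔ hΔc)).trans ?_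
        rw [integral_sub' h₁ h₂, integral_yukawa_norm_mul le_rfl hφ₂ hφc,
          integral_yukawa_norm_mul le_rfl hΔ hΔc, integral_yukawa_norm_mul zero_le_one hΔ hΔc]
    _ = 4 * π * φ 0 := sub_add_cancel _ _

lemma integral_K1_sub_mul (hφ : ContDiff ℝ 4 φ) (hφc : HasCompactSupport φ) (y : E3) :
    ∫ x, K1 (x - y) * (-(lap φ x) + lap (lap φ) x) = 4 * π * φ y := by
  have h := integral_K1_mul (φ := fun x => φ (x + y)) (hφ.comp (contDiff_id.add contDiff_const))
    (hφc.comp_homeomorph (Homeomorph.addRight y))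
  have hlap : lap (fun x => φ (x + y)) = fun x => lap φ (x + y) :=
    funext (lap_comp_add_right φ y)
  rw [zero_add, hlap] at h
  rw [← h, ← integral_add_right_eq_self _ y]
  simp only [add_sub_cancel_right, lap_comp_add_right]

end Kernel

section Convolution

variable {F : Type*} [NormedAddCommGroup F] [NormedSpace ℝ F] {μ : Measure E3} {f : E3 → F}
  {x₀ : E3}

lemma aestronglyMeasurable_of_integrable_K1_smul (hf : Integrable (fun y => K1 (x₀ - y) • f y) μ) :
    AEStronglyMeasurable f μ := by
  have hinv : Measurable fun y => (K1 (x₀ - y))⁻¹ := by fun_prop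
  refine (hinv.aestronglyMeasurable.smul hf.aestronglyMeasurable).congr (.of_forall fun y => ?_)
  exact inv_smul_smul₀ (K1_pos _).ne' _

lemma locallyIntegrable_of_integrable_K1_smul
    (hf : Integrable (fun y => K1 (x₀ - y) • f y) μ) : LocallyIntegrable f μ := by
  have hweight : Continuous fun y => 1 + ‖x₀ - y‖ := by fun_prop
  refine (hf.locallyIntegrable.continuous_smul hweight).mono
    (aestronglyMeasurable_of_integrable_K1_smul hf) (.of_forall fun y => ?_)
  rw [smul_smul, norm_smul]
  refine le_mul_of_one_le_left (norm_nonneg _) (le_norm_self _ |>.trans' ?_)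
  rw [← inv_le_iff_one_le_mul₀' (by positivity)]
  exact inv_one_add_norm_le_K1 _

lemma integrable_prod_smul_K1_smul [SFinite μ]
    (hf : Integrable (fun y => K1 (x₀ - y) • f y) μ) {L : E3 → ℝ} (hL : Continuous L)
    (hLc : HasCompactSupport L) :
    Integrable (fun p : E3 × E3 => L p.1 • K1 (p.1 - p.2) • f p.2) (volume.prod μ) := by
  have hweight : Integrable fun x => 2 * (1 + ‖x - x₀‖) * L x :=
    (by fun_prop : Continuous fun x => 2 * (1 + ‖x - x₀‖) * L x).integrable_of_hasCompactSupport
      hLc.mul_left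
  have hK : Measurable fun p : E3 × E3 => K1 (p.1 - p.2) := by fun_prop
  refine (hweight.norm.mul_prod hf.norm).mono (.smul (by fun_prop) <|
    hK.aestronglyMeasurable.smul (aestronglyMeasurable_of_integrable_K1_smul hf).comp_snd)
    (.of_forall fun p => ?_)
  simp only [norm_smul, norm_mul, norm_norm, norm_of_nonneg (K1_pos _).le]
  rw [norm_of_nonneg (by positivity : 0 ≤ 1 + ‖p.1 - x₀‖), RCLike.norm_ofNat]
  calc ‖L p.1‖ * (K1 (p.1 - p.2) * ‖f p.2‖)
      ≤ ‖L p.1‖ * (2 * (1 + ‖p.1 - x₀‖) * K1 (x₀ - p.2) * ‖f p.2‖) := by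
        gcongr
        exact K1_sub_le_mul_K1_sub _ _ _
    _ = _ := by ring

theorem conv_solves_distributional_general [CompleteSpace F] [SFinite μ]
    (hf : Integrable (fun y => K1 (x₀ - y) • f y) μ) :
    LocallyIntegrable f μ ∧
    ∀ φ : E3 → ℝ, ContDiff ℝ 4 φ → HasCompactSupport φ →
      ∫ x, (-(lap φ x) + lap (lap φ) x) • ∫ y, K1 (x - y) • f y ∂μ =
        (4 * π) • ∫ x, φ x • f x ∂μ := by
  refine ⟨locallyIntegrable_of_integrable_K1_smul hf, fun φ hφ hφc => ?_⟩
  set L : E3 → ℝ := fun x => -(lap φ x) + lap (lap φ) x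
  have hΔ : ContDiff ℝ 2 (lap φ) := contDiff_lap hφ (by norm_num)
  have hL : Continuous L := hΔ.continuous.neg.add (continuous_lap hΔ)
  have hΔc := hasCompactSupport_lap hφc
  have hLc : HasCompactSupport L := hΔc.neg.add (hasCompactSupport_lap hΔc)
  calc ∫ x, L x • ∫ y, K1 (x - y) • f y ∂μ
      = ∫ x, ∫ y, L x • K1 (x - y) • f y ∂μ := by simp_rw [integral_smul]
    _ = ∫ y, (∫ x, L x • K1 (x - y) • f y) ∂μ :=
        integral_integral_swap (integrable_prod_smul_K1_smul hf hL hLc)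
    _ = ∫ y, (∫ x, K1 (x - y) * L x) • f y ∂μ := by
        simp_rw [← integral_smul_const, smul_smul, mul_comm (L _)]
    _ = (4 * π) • ∫ y, φ y • f y ∂μ := by
        simp_rw [L, integral_K1_sub_mul hφ hφc, mul_smul, integral_smul]

end Convolution

lemma exists_integrable_of_lintegral_lintegral_enorm_ne_top {α β F : Type*} [MeasurableSpace α]
    [MeasurableSpace β] [NormedAddCommGroup F] {μ : Measure α} {ν : Measure β} {k : α → β → F}
    (hμ : μ ≠ 0) (hk : ∀ x, AEStronglyMeasurable (k x) ν)
    (h : ∫⁻ x, ∫⁻ y, ‖k x y‖ₑ ∂ν ∂μ ≠ ∞) : ∃ x, Integrable (k x) ν := by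
  contrapose! h
  have htop (x : α) : ∫⁻ y, ‖k x y‖ₑ ∂ν = ∞ := by
    by_contra hx
    exact h x ⟨hk x, Ne.lt_top hx⟩
  simp_rw [htop, lintegral_const, ENNReal.top_mul (Measure.measure_univ_ne_zero.2 hμ)]

lemma exists_integrable_K1_mul {f : E3 → ℝ} {μ ν : Measure E3} (hμ : μ ≠ 0)
    (hf : Measurable f) (hf0 : ∀ x, 0 ≤ f x)
    (h : ∫⁻ x, ∫⁻ y, ENNReal.ofReal (K1 (x - y) * f y) ∂ν ∂μ ≠ ∞) :
    ∃ x, Integrable (fun y => K1 (x - y) * f y) ν := by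
  refine exists_integrable_of_lintegral_lintegral_enorm_ne_top hμ
    (fun x => Measurable.aestronglyMeasurable (by fun_prop)) ?_
  simpa only [enorm_of_nonneg (mul_nonneg (K1_pos _).le (hf0 _))] using h

/-- Distributional solution from convolution with the kernel: if `f ≥ 0` is measurable and
`ψ_f = K*f` is locally integrable, then `f` is locally integrable and `ψ_f` solves
`-Δψ + Δ²ψ = 4π f` in the sense of distributions. -/
theorem conv_solves_distributional (f : E3 → ℝ) (hf : Measurable f) (hf0 : ∀ x, 0 ≤ f x)
    (hloc : ∀ s : Set E3, IsCompact s →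
      ∫⁻ x in s, ∫⁻ y, ENNReal.ofReal (K1 (x - y) * f y) < ⊤) :
    LocallyIntegrable f volume ∧
    ∀ φ : E3 → ℝ, ContDiff ℝ (⊤ : ℕ∞) φ → HasCompactSupport φ →
      ∫ x, (∫ y, K1 (x - y) * f y) * (-(lap φ x) + lap (lap φ) x) =
        4 * Real.pi * ∫ x, f x * φ x := by
  obtain ⟨x₀, hx₀⟩ := exists_integrable_K1_mul (μ := volume.restrict (closedBall 0 1))
    (by simp [pi_pos]) hf hf0 (hloc _ (isCompact_closedBall 0 1)).ne
  obtain ⟨hloc_f, hdistrib⟩ := conv_solves_distributional_general hx₀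
  refine ⟨hloc_f, fun φ hφ hφc => ?_⟩
  simpa only [smul_eq_mul, mul_comm] using hdistrib φ (hφ.of_le (by norm_cast)) hφc
end
end

section
/- (Nonnegativity of the Bopp–Podolsky energy.) Let K : ℝ³ → ℝ be defined by K(x) = (1 - exp(-‖x‖))/‖x‖ for x ≠ 0 and K(0) = 1, and set V(f,f) = ∫_{ℝ³}∫_{ℝ³} K(x-y) f(x) f(y) dx dy. If f : ℝ³ → ℝ is measurable and V(|f|,|f|) < ∞, then V(f,f) ≥ 0. -/
open MeasureTheory Real
open scoped ENNReal Classical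

noncomputable section

/-!
The kernel is `∫₀¹ exp (-s ‖x - y‖) ds`. For each `s > 0`, `exp (-s ‖x - y‖)` is in turn a
superposition with nonnegative weights of Gaussians `exp (-b ‖x - y‖²)`, and each Gaussian is a
superposition of products `h x * h y`, because the convolution of two Gaussians is a Gaussian. The
quadratic form of `h x * h y` is the square `(∫ h f)²`. Since all these kernels are nonnegative,
finiteness of the energy of `|f|` is exactly what Fubini needs to integrate the squares.
-/

section PosDefKernel

variable {X : Type*} [MeasurableSpace X] {μ : Measure X}

/-- A real kernel `k` is positive definite with respect to `μ` if its quadratic form is nonnegative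
on every function at which this form converges absolutely. -/
def IsPosDefKernel (μ : Measure X) (k : X → X → ℝ) : Prop :=
  ∀ f : X → ℝ, AEStronglyMeasurable f μ →
    Integrable (fun p : X × X => k p.1 p.2 * f p.1 * f p.2) (μ.prod μ) →
      0 ≤ ∫ p : X × X, k p.1 p.2 * f p.1 * f p.2 ∂μ.prod μ

theorem isPosDefKernel_mul_self [SFinite μ] (h : X → ℝ) :
    IsPosDefKernel μ fun x y => h x * h y := by
  intro f _ _
  calc 0 ≤ (∫ x, h x * f x ∂μ) * ∫ x, h x * f x ∂μ := mul_self_nonneg _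
    _ = ∫ p : X × X, (h p.1 * f p.1) * (h p.2 * f p.2) ∂μ.prod μ :=
      (integral_prod_mul (fun x => h x * f x) fun x => h x * f x).symm
    _ = ∫ p : X × X, h p.1 * h p.2 * f p.1 * f p.2 ∂μ.prod μ := by
      congr with p
      ring

theorem IsPosDefKernel.const_mul {k : X → X → ℝ} (hk : IsPosDefKernel μ k) {c : ℝ} (hc : 0 ≤ c) :
    IsPosDefKernel μ fun x y => c * k x y := by
  intro f hf hint
  obtain rfl | hc := hc.eq_or_lt
  · simp
  simp only [mul_assoc] at hint ⊢
  rw [integral_const_mul]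
  rw [integrable_const_mul_iff hc.ne'.isUnit] at hint
  exact mul_nonneg hc.le (by simpa only [mul_assoc] using hk f hf (by simpa only [mul_assoc]))

theorem IsPosDefKernel.integral [SFinite μ] {S : Type*} [MeasurableSpace S] {ν : Measure S}
    [SFinite ν] {k : S → X → X → ℝ} (hk : ∀ᵐ s ∂ν, IsPosDefKernel μ (k s))
    (hk_meas : Measurable fun q : S × X × X => k q.1 q.2.1 q.2.2)
    (hk_nonneg : ∀ s x y, 0 ≤ k s x y) (hk_int : ∀ x y, Integrable (fun s => k s x y) ν) :
    IsPosDefKernel μ fun x y => ∫ s, k s x y ∂ν := by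
  intro f hf hint
  let F : S → X × X → ℝ := fun s p => k s p.1 p.2 * f p.1 * f p.2
  have hF_meas : AEStronglyMeasurable (Function.uncurry F) (ν.prod (μ.prod μ)) :=
    (hk_meas.aestronglyMeasurable.mul hf.comp_fst.comp_snd).mul hf.comp_snd.comp_snd
  have hF_norm (p : X × X) :
      ∫ s, ‖F s p‖ ∂ν = ‖(∫ s, k s p.1 p.2 ∂ν) * f p.1 * f p.2‖ := by
    simp only [F, norm_mul, integral_mul_const, norm_of_nonneg (hk_nonneg _ _ _),
      norm_of_nonneg (integral_nonneg fun s => hk_nonneg s p.1 p.2)]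
  have hF : Integrable (Function.uncurry F) (ν.prod (μ.prod μ)) := by
    refine (integrable_prod_iff' hF_meas).2 ⟨.of_forall fun p => ?_, ?_⟩
    · exact ((hk_int p.1 p.2).mul_const (f p.1)).mul_const (f p.2)
    · simpa only [Function.uncurry_apply_pair, hF_norm] using hint.norm
  calc 0 ≤ ∫ s, ∫ p, F s p ∂μ.prod μ ∂ν := by
        apply integral_nonneg_of_ae
        filter_upwards [hk, hF.prod_right_ae] with s hs hFs using hs f hf hFs
    _ = ∫ p, ∫ s, F s p ∂ν ∂μ.prod μ := integral_integral_swap hF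
    _ = ∫ p : X × X, (∫ s, k s p.1 p.2 ∂ν) * f p.1 * f p.2 ∂μ.prod μ := by
        simp only [F, integral_mul_const]

theorem integrable_mul_mul_of_lintegral_lt_top [SFinite μ] {k : X → X → ℝ}
    (hk_meas : Measurable (Function.uncurry k)) (hk_nonneg : ∀ x y, 0 ≤ k x y) {f : X → ℝ}
    (hf : AEStronglyMeasurable f μ)
    (hfin : ∫⁻ x, ∫⁻ y, ENNReal.ofReal (k x y * |f x| * |f y|) ∂μ ∂μ < ⊤) :
    Integrable (fun p : X × X => k p.1 p.2 * f p.1 * f p.2) (μ.prod μ) := by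
  have hmeas : AEStronglyMeasurable (fun p : X × X => k p.1 p.2 * f p.1 * f p.2) (μ.prod μ) :=
    (hk_meas.aestronglyMeasurable.mul hf.comp_fst).mul hf.comp_snd
  refine ⟨hmeas, ?_⟩
  rw [hasFiniteIntegral_iff_norm, lintegral_prod _ hmeas.norm.aemeasurable.ennreal_ofReal]
  simpa only [norm_mul, norm_of_nonneg (hk_nonneg _ _), norm_eq_abs] using hfin

end PosDefKernel

section CauchySchlomilch

variable {F : Type*} [NormedAddCommGroup F] [NormedSpace ℝ F] {s c : ℝ}

theorem hasDerivAt_mul_sub_div (s c : ℝ) {u : ℝ} (hu : u ≠ 0) :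
    HasDerivAt (fun u => s * u - c / u) (s + c / u ^ 2) u := by
  have h := ((hasDerivAt_id u).const_mul s).sub ((hasDerivAt_inv hu).const_mul c)
  exact h.congr_deriv (by field_simp; ring)

theorem strictMonoOn_mul_sub_div (hs : 0 < s) (hc : 0 ≤ c) :
    StrictMonoOn (fun u => s * u - c / u) (Set.Ioi 0) := fun _ ha _ _ hab => by
  linarith [mul_lt_mul_of_pos_left hab hs, div_le_div_of_nonneg_left hc ha hab.le]

theorem image_mul_sub_div_Ioi (hs : 0 < s) (hc : 0 < c) :
    (fun u => s * u - c / u) '' Set.Ioi 0 = Set.univ := by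
  refine Set.eq_univ_of_forall fun v => ?_
  -- The preimage of `v` is the positive root of `s * u ^ 2 - v * u - c`.
  have hsq : √(v ^ 2 + 4 * s * c) ^ 2 = v ^ 2 + 4 * s * c := sq_sqrt (by positivity)
  have hpos : 0 < v + √(v ^ 2 + 4 * s * c) := by
    have : |v| < √(v ^ 2 + 4 * s * c) := lt_sqrt_of_sq_lt <| by
      rw [sq_abs]
      exact lt_add_of_pos_right _ (by positivity)
    linarith [neg_abs_le v]
  refine ⟨(v + √(v ^ 2 + 4 * s * c)) / (2 * s), div_pos hpos (by positivity), ?_⟩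
  generalize √(v ^ 2 + 4 * s * c) = t at hsq hpos
  field_simp
  linear_combination hsq

theorem abs_add_div_sq (hs : 0 ≤ s) (hc : 0 ≤ c) (u : ℝ) :
    |s + c / u ^ 2| = s + c / u ^ 2 :=
  abs_of_nonneg (by positivity)

theorem integrableOn_add_div_sq_smul_comp (hs : 0 < s) (hc : 0 < c) {g : ℝ → F}
    (hg : Integrable g) :
    IntegrableOn (fun u => (s + c / u ^ 2) • g (s * u - c / u)) (Set.Ioi 0) := by
  have h := integrableOn_image_iff_integrableOn_abs_deriv_smul measurableSet_Ioi
    (fun u hu => (hasDerivAt_mul_sub_div s c (ne_of_gt hu)).hasDerivWithinAt)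
    (strictMonoOn_mul_sub_div hs hc.le).injOn g
  simp only [image_mul_sub_div_Ioi hs hc, integrableOn_univ, abs_add_div_sq hs.le hc.le] at h
  exact h.1 hg

theorem integral_add_div_sq_smul_comp (hs : 0 < s) (hc : 0 < c) (g : ℝ → F) :
    ∫ u in Set.Ioi 0, (s + c / u ^ 2) • g (s * u - c / u) = ∫ v, g v := by
  have h := integral_image_eq_integral_abs_deriv_smul measurableSet_Ioi
    (fun u hu => (hasDerivAt_mul_sub_div s c (ne_of_gt hu)).hasDerivWithinAt)
    (strictMonoOn_mul_sub_div hs hc.le).injOn g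
  simp only [image_mul_sub_div_Ioi hs hc, setIntegral_univ, abs_add_div_sq hs.le hc.le] at h
  exact h.symm

theorem integrableOn_comp_mul_sub_div (hs : 0 < s) (hc : 0 < c) {g : ℝ → F}
    (hg : Integrable g) : IntegrableOn (fun u => g (s * u - c / u)) (Set.Ioi 0) := by
  have hpos (u : ℝ) : 0 < s + c / u ^ 2 := by positivity
  have hbdd (u : ℝ) : ‖(s + c / u ^ 2)⁻¹‖ ≤ s⁻¹ := by
    rw [norm_of_nonneg (inv_nonneg.2 (hpos u).le)]
    exact inv_anti₀ hs (le_add_of_nonneg_right (by positivity))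
  refine ((integrableOn_add_div_sq_smul_comp hs hc hg).bdd_smul s⁻¹
    (φ := fun u => (s + c / u ^ 2)⁻¹) (Measurable.aestronglyMeasurable (by fun_prop))
    (.of_forall hbdd)).congr (.of_forall fun u => ?_)
  exact inv_smul_smul₀ (hpos u).ne' _

theorem integral_div_sq_smul_comp_div_Ioi (hc : 0 < c) (g : ℝ → F) :
    ∫ u in Set.Ioi 0, (c / u ^ 2) • g (c / u) = ∫ u in Set.Ioi 0, g u := by
  have hderiv : ∀ u ∈ Set.Ioi (0 : ℝ),
      HasDerivWithinAt (fun u => c / u) (-(c / u ^ 2)) (Set.Ioi 0) u := fun u hu =>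
    (((hasDerivAt_inv (ne_of_gt hu)).const_mul c).congr_deriv (by ring)).hasDerivWithinAt
  have hinj : Set.InjOn (fun u => c / u) (Set.Ioi 0) := fun _ _ _ _ hab =>
    inv_injective (mul_left_cancel₀ hc.ne' hab)
  have himage : (fun u => c / u) '' Set.Ioi 0 = Set.Ioi 0 :=
    Set.Subset.antisymm (Set.image_subset_iff.2 fun u hu => div_pos hc hu)
      fun v hv => ⟨c / v, div_pos hc hv, div_div_cancel₀ hc.ne'⟩
  have h := integral_image_eq_integral_abs_deriv_smul measurableSet_Ioi hderiv hinj g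
  have habs (u : ℝ) : |-(c / u ^ 2)| = c / u ^ 2 := by
    rw [abs_neg, abs_of_nonneg (by positivity)]
  simpa only [himage, habs] using h.symm

theorem integral_comp_mul_sub_div_Ioi (hs : 0 < s) (hc : 0 < c) {g : ℝ → F}
    (hg : Integrable g) (hg_even : g.Even) :
    ∫ u in Set.Ioi 0, g (s * u - c / u) = (2 * s)⁻¹ • ∫ v, g v := by
  have hint := integrableOn_comp_mul_sub_div hs hc hg
  have hint' : IntegrableOn (fun u => (c / u ^ 2) • g (s * u - c / u)) (Set.Ioi 0) :=
    ((integrableOn_add_div_sq_smul_comp hs hc hg).sub (hint.smul s)).congr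
      (.of_forall fun u => by simp [add_smul])
  -- The inversion `u ↦ (c / s) / u` exchanges `s * u` and `c / u`.
  have hinv : ∫ u in Set.Ioi 0, (c / u ^ 2) • g (s * u - c / u) =
      s • ∫ u in Set.Ioi 0, g (s * u - c / u) := by
    rw [← integral_div_sq_smul_comp_div_Ioi (div_pos hc hs), ← integral_smul]
    refine setIntegral_congr_fun measurableSet_Ioi fun u hu => ?_
    have hu : u ≠ 0 := ne_of_gt hu
    have hswap : s * (c / s / u) - c / (c / s / u) = -(s * u - c / u) := by
      field_simp
      ring
    simp only [hswap, hg_even _, smul_smul]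
    congr 1
    field_simp
  have htotal : ∫ v, g v = (2 * s) • ∫ u in Set.Ioi 0, g (s * u - c / u) := by
    simp only [← integral_add_div_sq_smul_comp hs hc g, add_smul]
    rw [integral_add (f := fun u => s • g (s * u - c / u)) (hint.smul s) hint', integral_smul,
      hinv, ← add_smul, two_mul]
  rw [htotal, inv_smul_smul₀ (by positivity)]

end CauchySchlomilch

section GaussianMixture

theorem integral_exp_neg_mul_sub_div_sq_Ioi {s c : ℝ} (hs : 0 < s) (hc : 0 ≤ c) :
    ∫ u in Set.Ioi 0, rexp (-(s * u - c / u) ^ 2) = √π / (2 * s) := by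
  obtain rfl | hc := hc.eq_or_lt
  · have h := integral_gaussian_Ioi (s ^ 2)
    rw [sqrt_div pi_pos.le, sqrt_sq hs.le, div_div, mul_comm s] at h
    simpa [mul_pow] using h
  · have hgauss : Integrable fun v : ℝ => rexp (-v ^ 2) := by
      simpa using integrable_exp_neg_mul_sq one_pos
    have h : ∫ v : ℝ, rexp (-v ^ 2) = √π := by simpa using integral_gaussian 1
    rw [integral_comp_mul_sub_div_Ioi hs hc hgauss fun v => by simp only [neg_sq], h, smul_eq_mul,
      inv_mul_eq_div]

/-- The density, in the scale `u`, of the Gaussians `exp (-(r / (2 * u)) ^ 2)` whose superposition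
is `exp (-s * r)`. -/
def gaussianScaleDensity (s u : ℝ) : ℝ := 2 * s / √π * rexp (-(s * u) ^ 2)

theorem gaussianScaleDensity_nonneg {s : ℝ} (hs : 0 ≤ s) (u : ℝ) :
    0 ≤ gaussianScaleDensity s u := by
  unfold gaussianScaleDensity
  positivity

theorem integral_gaussianScaleDensity_mul_exp {s r : ℝ} (hs : 0 < s) (hr : 0 ≤ r) :
    ∫ u in Set.Ioi 0, gaussianScaleDensity s u * rexp (-(1 / (2 * u)) ^ 2 * r ^ 2) =
      rexp (-s * r) := by
  have hsquare : ∀ u ∈ Set.Ioi (0 : ℝ),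
      gaussianScaleDensity s u * rexp (-(1 / (2 * u)) ^ 2 * r ^ 2) =
        2 * s / √π * rexp (-s * r) * rexp (-(s * u - r / 2 / u) ^ 2) := fun u hu => by
    have hu : u ≠ 0 := ne_of_gt hu
    rw [gaussianScaleDensity, mul_assoc, mul_assoc, ← exp_add, ← exp_add]
    congr 2
    field_simp
    ring
  rw [setIntegral_congr_fun measurableSet_Ioi hsquare, integral_const_mul,
    integral_exp_neg_mul_sub_div_sq_Ioi hs (by positivity)]
  field_simp

end GaussianMixture

section InnerProductSpace

variable {E : Type*} [NormedAddCommGroup E] [InnerProductSpace ℝ E]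

theorem norm_sub_sq_add_norm_sub_sq (x y z : E) :
    ‖x - z‖ ^ 2 + ‖y - z‖ ^ 2 = 2 * ‖z - midpoint ℝ x y‖ ^ 2 + ‖x - y‖ ^ 2 / 2 := by
  have hsum : (x - z) + (y - z) = (-2 : ℝ) • (z - midpoint ℝ x y) := by
    rw [midpoint_eq_smul_add, invOf_eq_inv]
    module
  have h := parallelogram_law_with_norm ℝ (x - z) (y - z)
  rw [hsum, sub_sub_sub_cancel_right, norm_smul, norm_neg, norm_ofNat] at h
  linear_combination -h / 2

theorem exp_mul_exp_eq_exp_midpoint_mul (b : ℝ) (x y z : E) :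
    rexp (-(2 * b) * ‖x - z‖ ^ 2) * rexp (-(2 * b) * ‖y - z‖ ^ 2) =
      rexp (-(4 * b) * ‖z - midpoint ℝ x y‖ ^ 2) * rexp (-b * ‖x - y‖ ^ 2) := by
  rw [← exp_add, ← exp_add]
  congr 1
  linear_combination -(2 * b) * norm_sub_sq_add_norm_sub_sq x y z

variable [FiniteDimensional ℝ E] [MeasurableSpace E] [BorelSpace E]

theorem integrable_exp_neg_mul_norm_sq {b : ℝ} (hb : 0 < b) :
    Integrable fun z : E => rexp (-b * ‖z‖ ^ 2) :=
  .of_integral_ne_zero <| by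
    rw [GaussianFourier.integral_rexp_neg_mul_sq_norm hb]
    positivity

theorem integrable_exp_mul_exp {b : ℝ} (hb : 0 < b) (x y : E) :
    Integrable fun z => rexp (-(2 * b) * ‖x - z‖ ^ 2) * rexp (-(2 * b) * ‖y - z‖ ^ 2) := by
  simp only [exp_mul_exp_eq_exp_midpoint_mul]
  exact ((integrable_exp_neg_mul_norm_sq (by positivity)).comp_sub_right _).mul_const _

theorem integral_exp_mul_exp {b : ℝ} (hb : 0 < b) (x y : E) :
    ∫ z, rexp (-(2 * b) * ‖x - z‖ ^ 2) * rexp (-(2 * b) * ‖y - z‖ ^ 2) =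
      (π / (4 * b)) ^ (Module.finrank ℝ E / 2 : ℝ) * rexp (-b * ‖x - y‖ ^ 2) := by
  simp only [exp_mul_exp_eq_exp_midpoint_mul]
  rw [integral_mul_const, integral_sub_right_eq_self fun z : E => rexp (-(4 * b) * ‖z‖ ^ 2),
    GaussianFourier.integral_rexp_neg_mul_sq_norm (by positivity)]

variable {μ : Measure E} [SFinite μ]

theorem isPosDefKernel_gaussian {b : ℝ} (hb : 0 < b) :
    IsPosDefKernel μ fun x y : E => rexp (-b * ‖x - y‖ ^ 2) := by
  have hmix : IsPosDefKernel μ fun x y : E =>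
      ∫ z, rexp (-(2 * b) * ‖x - z‖ ^ 2) * rexp (-(2 * b) * ‖y - z‖ ^ 2) :=
    .integral (.of_forall fun z => isPosDefKernel_mul_self _) (by fun_prop)
      (fun _ _ _ => by positivity) (integrable_exp_mul_exp hb)
  simp only [integral_exp_mul_exp hb] at hmix
  have hC : 0 < (π / (4 * b)) ^ (Module.finrank ℝ E / 2 : ℝ) := by positivity
  simpa only [inv_mul_cancel_left₀ hC.ne'] using hmix.const_mul (inv_nonneg.2 hC.le)

theorem isPosDefKernel_exp_neg_mul_norm {s : ℝ} (hs : 0 < s) :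
    IsPosDefKernel μ fun x y : E => rexp (-s * ‖x - y‖) := by
  simp only [← integral_gaussianScaleDensity_mul_exp hs (norm_nonneg _)]
  refine .integral ?_ (by unfold gaussianScaleDensity; fun_prop)
    (fun u _ _ => mul_nonneg (gaussianScaleDensity_nonneg hs.le u) (exp_nonneg _)) fun x y => ?_
  · filter_upwards [ae_restrict_mem measurableSet_Ioi] with u hu
    have hu : 0 < u := hu
    simpa only [neg_mul] using (isPosDefKernel_gaussian (b := (1 / (2 * u)) ^ 2)
      (by positivity)).const_mul (gaussianScaleDensity_nonneg hs.le u)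
  · refine .of_integral_ne_zero ?_
    rw [integral_gaussianScaleDensity_mul_exp hs (norm_nonneg _)]
    exact (exp_pos _).ne'

end InnerProductSpace

section BoppPodolsky

/-- The radial profile `r ↦ (1 - exp (-r)) / r` of the Bopp–Podolsky kernel, with its limit `1` as
value at the origin. -/
def boppPodolskyProfile (r : ℝ) : ℝ := if r = 0 then 1 else (1 - rexp (-r)) / r

theorem K1_eq_boppPodolskyProfile_norm (x : E3) : K1 x = boppPodolskyProfile ‖x‖ := by
  simp only [K1, boppPodolskyProfile, norm_eq_zero]

theorem measurable_boppPodolskyProfile : Measurable boppPodolskyProfile :=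
  .ite (measurableSet_singleton 0) (by fun_prop) (by fun_prop)

theorem integral_exp_neg_mul_eq_boppPodolskyProfile (r : ℝ) :
    ∫ s in Set.Ioc 0 1, rexp (-s * r) = boppPodolskyProfile r := by
  rw [← intervalIntegral.integral_of_le zero_le_one, boppPodolskyProfile]
  split_ifs with hr
  · simp [hr]
  · simp only [neg_mul_comm]
    rw [intervalIntegral.integral_comp_mul_right _ (neg_ne_zero.2 hr), integral_exp, zero_mul,
      one_mul, exp_zero, smul_eq_mul]
    field_simp
    ring

theorem boppPodolskyProfile_nonneg (r : ℝ) : 0 ≤ boppPodolskyProfile r := by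
  rw [← integral_exp_neg_mul_eq_boppPodolskyProfile]
  exact integral_nonneg fun s => exp_nonneg _

variable {E : Type*} [NormedAddCommGroup E] [InnerProductSpace ℝ E] [FiniteDimensional ℝ E]
  [MeasurableSpace E] [BorelSpace E] {μ : Measure E} [SFinite μ]

theorem isPosDefKernel_boppPodolskyProfile :
    IsPosDefKernel μ fun x y : E => boppPodolskyProfile ‖x - y‖ := by
  simp only [← integral_exp_neg_mul_eq_boppPodolskyProfile]
  refine .integral ?_ (by fun_prop) (fun _ _ _ => exp_nonneg _) fun x y => ?_
  · filter_upwards [ae_restrict_mem measurableSet_Ioc] with s hs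
    exact isPosDefKernel_exp_neg_mul_norm hs.1
  · exact (Continuous.integrableOn_Icc (by fun_prop)).mono_set Set.Ioc_subset_Icc_self

theorem energy_nonneg_general {f : E → ℝ} (hf : AEStronglyMeasurable f μ)
    (hV : ∫⁻ x, ∫⁻ y, ENNReal.ofReal (boppPodolskyProfile ‖x - y‖ * |f x| * |f y|) ∂μ ∂μ < ⊤) :
    0 ≤ ∫ x, ∫ y, boppPodolskyProfile ‖x - y‖ * f x * f y ∂μ ∂μ := by
  have hmeas : Measurable fun p : E × E => boppPodolskyProfile ‖p.1 - p.2‖ :=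
    measurable_boppPodolskyProfile.comp (by fun_prop)
  have hint : Integrable (fun p : E × E => boppPodolskyProfile ‖p.1 - p.2‖ * f p.1 * f p.2)
      (μ.prod μ) :=
    integrable_mul_mul_of_lintegral_lt_top hmeas (fun _ _ => boppPodolskyProfile_nonneg _) hf hV
  rw [← integral_prod _ hint]
  exact isPosDefKernel_boppPodolskyProfile f hf hint

end BoppPodolsky

/-- Nonnegativity of the Bopp–Podolsky energy: if `f` is measurable and
`V(|f|,|f|) < ∞`, then `V(f,f) ≥ 0`. -/
theorem energy_nonneg (f : E3 → ℝ) (hf : Measurable f)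
    (hV : Vlin (fun x => |f x|) (fun x => |f x|) < ⊤) :
    0 ≤ Vr f f := by
  simpa only [Vr, K1_eq_boppPodolskyProfile_norm] using
    energy_nonneg_general hf.aestronglyMeasurable
      (by simpa only [Vlin, K1_eq_boppPodolskyProfile_norm] using hV)
end
end

section
/- (Cauchy–Schwarz inequality for the Bopp–Podolsky energy.) Let K : ℝ³ → ℝ be defined by K(x) = (1 - exp(-‖x‖))/‖x‖ for x ≠ 0 and K(0) = 1, and for measurable f, g : ℝ³ → ℝ set V(f,g) = ∫_{ℝ³}∫_{ℝ³} K(x-y) f(x) g(y) dx dy. If f, g : ℝ³ → ℝ are measurable with V(|f|,|f|) < ∞ and V(|g|,|g|) < ∞, then V(|f|,|g|) < ∞ (so V(f,g) is a well-defined real number) and V(f,g)² ≤ V(f,f) · V(g,g). -/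
open MeasureTheory Real
open scoped ENNReal Classical

noncomputable section

/-!
The kernel is a mixture of Gaussians: `K(x) = ∫₀¹ exp (-t ‖x‖) dt`, also at `x = 0`, and
`exp (-t ‖x‖)` is the average of `exp (-(t / 2u)² ‖x‖²)` over the law of density
`2 / √π * exp (-u²)` on `u > 0`. By the parallelogram law, each Gaussian is a convolution square,
`exp (-c ‖x - y‖²) = C ∫ exp (-2c ‖x - z‖²) exp (-2c ‖y - z‖²) dz`. Hence
`K(x - y) = ∫ φ(x, w) φ(y, w) dμ(w)` with `φ ≥ 0`, and Fubini turns `V(f, g)` into the `L²(μ)` inner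
product of the transforms `w ↦ ∫ f(x) φ(x, w) dx` of `f` and `g`. For these, the claim is the
Cauchy–Schwarz inequality in `L²(μ)`.
-/

open Filter Set Function Topology

section GaussianIntegrals

theorem lintegral_Ioi_of_hasDerivAt_of_nonneg_of_tendsto {g g' : ℝ → ℝ} {a l m : ℝ}
    (hderiv : ∀ x ∈ Ioi a, HasDerivAt g (g' x) x) (hg' : ∀ x ∈ Ioi a, 0 ≤ g' x)
    (hl : Tendsto g (𝓝[>] a) (𝓝 l)) (hm : Tendsto g atTop (𝓝 m)) :
    ∫⁻ x in Ioi a, ENNReal.ofReal (g' x) = ENNReal.ofReal (m - l) := by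
  have hcont : ContinuousWithinAt (update g a l) (Ici a) a := by
    rwa [continuousWithinAt_update_same, Ici_sdiff_left]
  have hderiv' : ∀ x ∈ Ioi a, HasDerivAt (update g a l) (g' x) x := fun x hx ↦
    (hderiv x hx).congr_of_eventuallyEq <| by
      filter_upwards [Ioi_mem_nhds hx] with y hy using update_of_ne (ne_of_gt hy) _ _
  have hm' : Tendsto (update g a l) atTop (𝓝 m) := hm.congr' <| by
    filter_upwards [eventually_gt_atTop a] with y hy using (update_of_ne hy.ne' _ _).symm
  rw [← ofReal_integral_eq_lintegral_ofReal
      (integrableOn_Ioi_deriv_of_nonneg hcont hderiv' hg' hm')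
      (ae_restrict_of_forall_mem measurableSet_Ioi hg'),
    integral_Ioi_of_hasDerivAt_of_nonneg hcont hderiv' hg' hm', update_self]

/-- The primitive `u ↦ ∫₀ᵘ exp (-v²) dv` of the Gaussian, which is `√π / 2` times the error
function. -/
def gaussianPrimitive (u : ℝ) : ℝ := ∫ v in (0 : ℝ)..u, exp (-v ^ 2)

theorem hasDerivAt_gaussianPrimitive (u : ℝ) :
    HasDerivAt gaussianPrimitive (exp (-u ^ 2)) u :=
  have hcont : Continuous fun v : ℝ ↦ exp (-v ^ 2) := by fun_prop
  hcont.integral_hasStrictDerivAt 0 u |>.hasDerivAt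

theorem gaussianPrimitive_neg (u : ℝ) : gaussianPrimitive (-u) = -gaussianPrimitive u := by
  have h := intervalIntegral.integral_comp_neg (a := 0) (b := u) fun v : ℝ ↦ exp (-v ^ 2)
  simp only [neg_sq, neg_zero] at h
  rw [gaussianPrimitive, gaussianPrimitive, h, intervalIntegral.integral_symm]

theorem tendsto_gaussianPrimitive_atTop :
    Tendsto gaussianPrimitive atTop (𝓝 (√π / 2)) := by
  have hint : Integrable fun v : ℝ ↦ exp (-v ^ 2) := by
    simpa using integrable_exp_neg_mul_sq one_pos
  have hval : ∫ v in Ioi (0 : ℝ), exp (-v ^ 2) = √π / 2 := by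
    simpa using integral_gaussian_Ioi 1
  exact hval ▸ intervalIntegral_tendsto_integral_Ioi 0 hint.integrableOn tendsto_id

theorem tendsto_gaussianPrimitive_atBot :
    Tendsto gaussianPrimitive atBot (𝓝 (-(√π / 2))) :=
  (tendsto_gaussianPrimitive_atTop.comp tendsto_neg_atBot_atTop).neg.congr fun u ↦ by
    rw [comp_apply, gaussianPrimitive_neg, neg_neg]

/-- A primitive on `(0, ∞)` of `u ↦ exp (-(a u)² - (b / u)²)`, found by completing the square in
the two ways `(a u ∓ b / u)² = (a u)² + (b / u)² ∓ 2 a b`. -/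
def glasserPrimitive (a b u : ℝ) : ℝ :=
  (exp (-(2 * a * b)) * gaussianPrimitive (a * u - b / u) +
    exp (2 * a * b) * gaussianPrimitive (a * u + b / u)) / (2 * a)

theorem hasDerivAt_glasserPrimitive {a u : ℝ} (ha : a ≠ 0) (hu : u ≠ 0) (b : ℝ) :
    HasDerivAt (glasserPrimitive a b) (exp (-(a * u) ^ 2 - (b / u) ^ 2)) u := by
  have hmul : HasDerivAt (fun u : ℝ ↦ a * u) a u := by
    simpa using (hasDerivAt_id u).const_mul a
  have hdiv : HasDerivAt (fun u : ℝ ↦ b / u) (-b / u ^ 2) u := by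
    simpa using (hasDerivAt_const u b).fun_div (hasDerivAt_id u) hu
  have hsub := ((hasDerivAt_gaussianPrimitive _).comp u (hmul.sub hdiv)).const_mul
    (exp (-(2 * a * b)))
  have hadd := ((hasDerivAt_gaussianPrimitive _).comp u (hmul.add hdiv)).const_mul
    (exp (2 * a * b))
  refine ((hsub.add hadd).div_const (2 * a)).congr_deriv ?_
  have esub : exp (-(2 * a * b)) * exp (-(a * u - b / u) ^ 2) =
      exp (-(a * u) ^ 2 - (b / u) ^ 2) := by
    rw [← exp_add]; congr 1; field_simp; ring
  have eadd : exp (2 * a * b) * exp (-(a * u + b / u) ^ 2) =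
      exp (-(a * u) ^ 2 - (b / u) ^ 2) := by
    rw [← exp_add]; congr 1; field_simp; ring
  simp only [Pi.sub_apply, Pi.add_apply]
  rw [← mul_assoc, ← mul_assoc, esub, eadd]
  field_simp
  ring

theorem tendsto_glasserPrimitive_nhdsGT_zero (a : ℝ) {b : ℝ} (hb : 0 < b) :
    Tendsto (glasserPrimitive a b) (𝓝[>] 0)
      (𝓝 ((exp (-(2 * a * b)) * -(√π / 2) + exp (2 * a * b) * (√π / 2)) / (2 * a))) := by
  have hmul : Tendsto (fun u : ℝ ↦ a * u) (𝓝[>] 0) (𝓝 0) :=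
    tendsto_nhdsWithin_of_tendsto_nhds <| by simpa using (continuous_const_mul a).tendsto 0
  have hdiv : Tendsto (fun u : ℝ ↦ b / u) (𝓝[>] 0) atTop :=
    tendsto_inv_nhdsGT_zero.const_mul_atTop hb
  have hsub : Tendsto (fun u : ℝ ↦ a * u - b / u) (𝓝[>] 0) atBot := by
    simpa only [sub_eq_add_neg] using hmul.add_atBot (tendsto_neg_atBot_iff.2 hdiv)
  exact (((tendsto_gaussianPrimitive_atBot.comp hsub).const_mul _).add
    ((tendsto_gaussianPrimitive_atTop.comp (hmul.add_atTop hdiv)).const_mul _)).div_const _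

theorem tendsto_glasserPrimitive_atTop {a : ℝ} (ha : 0 < a) (b : ℝ) :
    Tendsto (glasserPrimitive a b) atTop
      (𝓝 ((exp (-(2 * a * b)) * (√π / 2) + exp (2 * a * b) * (√π / 2)) / (2 * a))) := by
  have hmul : Tendsto (fun u : ℝ ↦ a * u) atTop atTop := tendsto_id.const_mul_atTop ha
  have hdiv : Tendsto (fun u : ℝ ↦ b / u) atTop (𝓝 0) := tendsto_const_nhds.div_atTop tendsto_id
  have hsub : Tendsto (fun u : ℝ ↦ a * u - b / u) atTop atTop := by
    simpa only [sub_eq_add_neg] using hmul.atTop_add hdiv.neg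
  exact (((tendsto_gaussianPrimitive_atTop.comp hsub).const_mul _).add
    ((tendsto_gaussianPrimitive_atTop.comp (hmul.atTop_add hdiv)).const_mul _)).div_const _

theorem lintegral_exp_neg_mul_sq_sub_div_sq {a b : ℝ} (ha : 0 < a) (hb : 0 ≤ b) :
    ∫⁻ u in Ioi (0 : ℝ), ENNReal.ofReal (exp (-(a * u) ^ 2 - (b / u) ^ 2)) =
      ENNReal.ofReal (√π / (2 * a) * exp (-(2 * a * b))) := by
  obtain rfl | hb := hb.eq_or_lt
  · have hval : ∫ u in Ioi (0 : ℝ), exp (-a ^ 2 * u ^ 2) = √π / (2 * a) := by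
      rw [integral_gaussian_Ioi, sqrt_div pi_pos.le, sqrt_sq ha.le, div_div, mul_comm a]
    simp only [zero_div, zero_pow two_ne_zero, sub_zero, mul_zero, neg_zero, exp_zero, mul_one,
      mul_pow, ← neg_mul]
    rw [← hval, ofReal_integral_eq_lintegral_ofReal
      (integrable_exp_neg_mul_sq (pow_pos ha 2)).integrableOn (ae_of_all _ fun _ ↦ (exp_pos _).le)]
  · rw [lintegral_Ioi_of_hasDerivAt_of_nonneg_of_tendsto
      (fun u hu ↦ hasDerivAt_glasserPrimitive ha.ne' (ne_of_gt hu) b) (fun _ _ ↦ (exp_pos _).le)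
      (tendsto_glasserPrimitive_nhdsGT_zero a hb) (tendsto_glasserPrimitive_atTop ha b)]
    congr 1
    field_simp
    ring

end GaussianIntegrals

theorem sq_integral_mul_le {α : Type*} [MeasurableSpace α] {μ : Measure α} {F G : α → ℝ}
    (hF : MemLp F 2 μ) (hG : MemLp G 2 μ) :
    (∫ a, F a * G a ∂μ) ^ 2 ≤ (∫ a, F a * F a ∂μ) * ∫ a, G a * G a ∂μ := by
  have inner_toLp {u v : α → ℝ} (hu : MemLp u 2 μ) (hv : MemLp v 2 μ) :
      inner ℝ (hu.toLp u) (hv.toLp v) = ∫ a, u a * v a ∂μ := by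
    rw [L2.inner_def]
    refine integral_congr_ae ?_
    filter_upwards [hu.coeFn_toLp, hv.coeFn_toLp] with a hua hva
    rw [hua, hva]
    exact mul_comm _ _
  have := real_inner_mul_inner_self_le (hF.toLp F) (hG.toLp G)
  rwa [inner_toLp, inner_toLp, inner_toLp, ← sq] at this

section Energy

variable {X W : Type*} [MeasurableSpace X]

/-- The interaction energy of the densities `f` and `g` for the kernel `k`, as an iterated lower
integral; only the positive part of the integrand is counted. -/
def lenergy (k : X → X → ℝ) (ν : Measure X) (f g : X → ℝ) : ℝ≥0∞ :=
  ∫⁻ x, ∫⁻ y, ENNReal.ofReal (k x y * f x * g y) ∂ν ∂ν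

/-- The interaction energy of the densities `f` and `g` for the kernel `k`, as an iterated Bochner
integral. -/
def energy (k : X → X → ℝ) (ν : Measure X) (f g : X → ℝ) : ℝ :=
  ∫ x, ∫ y, k x y * f x * g y ∂ν ∂ν

/-- The transform of a density `f` by a feature map `φ`; it turns the energy into the `L²` inner
product on the feature space `W`. -/
def featureTransform (φ : X → W → ℝ) (ν : Measure X) (f : X → ℝ) (w : W) : ℝ :=
  ∫ x, f x * φ x w ∂ν

/-- The function of `((x, y), w)` whose integral over `w` is the integrand of the energy, and whose
integral over `(x, y)` is the product of the transforms of `f` and `g`. -/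
def featureIntegrand (φ : X → W → ℝ) (f g : X → ℝ) (p : (X × X) × W) : ℝ :=
  f p.1.1 * φ p.1.1 p.2 * (g p.1.2 * φ p.1.2 p.2)

theorem integral_prod_featureIntegrand {φ : X → W → ℝ} {ν : Measure X} [SFinite ν]
    {f g : X → ℝ} (w : W) :
    ∫ p, featureIntegrand φ f g (p, w) ∂ν.prod ν =
      featureTransform φ ν f w * featureTransform φ ν g w :=
  integral_prod_mul (fun x ↦ f x * φ x w) fun y ↦ g y * φ y w

variable [MeasurableSpace W]

/-- `φ` is a nonnegative feature map for the kernel `k`: the inner product of `φ x` and `φ y` in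
`L²(μ)` is `k x y`. It is stated with a lower integral, so that integrability need not be assumed
separately. -/
structure IsFeatureMap (k : X → X → ℝ) (μ : Measure W) (φ : X → W → ℝ) : Prop where
  measurable : Measurable (uncurry φ)
  nonneg : ∀ x w, 0 ≤ φ x w
  kernel_nonneg : ∀ x y, 0 ≤ k x y
  lintegral_mul : ∀ x y, ∫⁻ w, ENNReal.ofReal (φ x w * φ y w) ∂μ = ENNReal.ofReal (k x y)

namespace IsFeatureMap

variable {k : X → X → ℝ} {φ : X → W → ℝ} {ν : Measure X} {μ : Measure W} {f g : X → ℝ}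

theorem measurable_left (h : IsFeatureMap k μ φ) (x : X) : Measurable (φ x) :=
  h.measurable.comp measurable_prodMk_left

theorem measurable_right (h : IsFeatureMap k μ φ) (w : W) : Measurable fun x ↦ φ x w :=
  h.measurable.comp measurable_prodMk_right

theorem integral_mul (h : IsFeatureMap k μ φ) (x y : X) : ∫ w, φ x w * φ y w ∂μ = k x y := by
  rw [integral_eq_lintegral_of_nonneg_ae
      (ae_of_all _ fun w ↦ mul_nonneg (h.nonneg x w) (h.nonneg y w))
      ((h.measurable_left x).mul (h.measurable_left y)).aestronglyMeasurable,
    h.lintegral_mul, ENNReal.toReal_ofReal (h.kernel_nonneg x y)]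

theorem lintegral_enorm_featureIntegrand_prodMk (h : IsFeatureMap k μ φ) (x y : X) :
    ∫⁻ w, ‖featureIntegrand φ f g ((x, y), w)‖ₑ ∂μ = ENNReal.ofReal (k x y * |f x| * |g y|) := by
  have hfactor (w : W) : ‖featureIntegrand φ f g ((x, y), w)‖ₑ =
      ENNReal.ofReal (|f x| * |g y|) * ENNReal.ofReal (φ x w * φ y w) := by
    rw [← ENNReal.ofReal_mul (by positivity), Real.enorm_eq_ofReal_abs]
    simp only [featureIntegrand, abs_mul, abs_of_nonneg (h.nonneg _ _)]
    congr 1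
    ring
  simp only [hfactor]
  rw [lintegral_const_mul _
      ((h.measurable_left x).fun_mul (h.measurable_left y)).ennreal_ofReal, h.lintegral_mul,
    ← ENNReal.ofReal_mul (by positivity), mul_comm, mul_assoc]

theorem integral_featureIntegrand_prodMk (h : IsFeatureMap k μ φ) (x y : X) :
    ∫ w, featureIntegrand φ f g ((x, y), w) ∂μ = k x y * f x * g y := by
  have hfactor (w : W) : featureIntegrand φ f g ((x, y), w) = f x * g y * (φ x w * φ y w) :=
    mul_mul_mul_comm _ _ _ _
  simp only [hfactor]
  rw [integral_const_mul, h.integral_mul, mul_comm, mul_assoc]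

theorem aemeasurable_mul (h : IsFeatureMap k μ φ) (hf : AEMeasurable f ν) :
    AEMeasurable (fun p : X × W ↦ f p.1 * φ p.1 p.2) (ν.prod μ) :=
  hf.comp_fst.mul h.measurable.aemeasurable

theorem aemeasurable_featureIntegrand (h : IsFeatureMap k μ φ) (hf : AEMeasurable f ν)
    (hg : AEMeasurable g ν) :
    AEMeasurable (featureIntegrand φ f g) ((ν.prod ν).prod μ) := by
  have hφ₁ : Measurable fun p : (X × X) × W ↦ φ p.1.1 p.2 :=
    h.measurable.comp (measurable_fst.fst.prodMk measurable_snd)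
  have hφ₂ : Measurable fun p : (X × X) × W ↦ φ p.1.2 p.2 :=
    h.measurable.comp (measurable_fst.snd.prodMk measurable_snd)
  exact (hf.comp_fst.comp_fst.mul hφ₁.aemeasurable).mul
    (hg.comp_snd.comp_fst.mul hφ₂.aemeasurable)

variable [SFinite ν] [SFinite μ]

theorem lintegral_enorm_featureIntegrand (h : IsFeatureMap k μ φ) (hf : AEMeasurable f ν)
    (hg : AEMeasurable g ν) :
    ∫⁻ p, ‖featureIntegrand φ f g p‖ₑ ∂(ν.prod ν).prod μ =
      lenergy k ν (fun x ↦ |f x|) fun x ↦ |g x| := by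
  have hmeas := (h.aemeasurable_featureIntegrand hf hg).enorm
  rw [lintegral_prod _ hmeas, lintegral_prod _ hmeas.lintegral_prod_right']
  simp only [h.lintegral_enorm_featureIntegrand_prodMk, lenergy]

theorem lenergy_abs_eq_lintegral (h : IsFeatureMap k μ φ) (hf : AEMeasurable f ν)
    (hg : AEMeasurable g ν) :
    lenergy k ν (fun x ↦ |f x|) (fun x ↦ |g x|) =
      ∫⁻ w, (∫⁻ x, ‖f x * φ x w‖ₑ ∂ν) * ∫⁻ y, ‖g y * φ y w‖ₑ ∂ν ∂μ := by
  rw [← h.lintegral_enorm_featureIntegrand hf hg,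
    lintegral_prod_symm _ (h.aemeasurable_featureIntegrand hf hg).enorm]
  refine lintegral_congr fun w ↦ ?_
  rw [← lintegral_prod_mul (hf.fun_mul (h.measurable_right w).aemeasurable).enorm
    (hg.fun_mul (h.measurable_right w).aemeasurable).enorm]
  simp only [featureIntegrand, enorm_mul]

theorem lenergy_abs_le_add (h : IsFeatureMap k μ φ) (hf : AEMeasurable f ν)
    (hg : AEMeasurable g ν) :
    lenergy k ν (fun x ↦ |f x|) (fun x ↦ |g x|) ≤
      lenergy k ν (fun x ↦ |f x|) (fun x ↦ |f x|) +
        lenergy k ν (fun x ↦ |g x|) fun x ↦ |g x| := by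
  have hmeas := (h.aemeasurable_mul hf).enorm.lintegral_prod_left'
  rw [h.lenergy_abs_eq_lintegral hf hg, h.lenergy_abs_eq_lintegral hf hf,
    h.lenergy_abs_eq_lintegral hg hg, ← lintegral_add_left' (hmeas.fun_mul hmeas)]
  refine lintegral_mono fun w ↦ ?_
  rcases le_total (∫⁻ x, ‖f x * φ x w‖ₑ ∂ν) (∫⁻ y, ‖g y * φ y w‖ₑ ∂ν) with hle | hle
  · exact (mul_le_mul_left hle _).trans le_add_self
  · exact (mul_le_mul_right hle _).trans le_self_add

theorem lenergy_abs_lt_top (h : IsFeatureMap k μ φ) (hf : AEMeasurable f ν)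
    (hg : AEMeasurable g ν)
    (hff : lenergy k ν (fun x ↦ |f x|) (fun x ↦ |f x|) < ⊤)
    (hgg : lenergy k ν (fun x ↦ |g x|) (fun x ↦ |g x|) < ⊤) :
    lenergy k ν (fun x ↦ |f x|) (fun x ↦ |g x|) < ⊤ :=
  (h.lenergy_abs_le_add hf hg).trans_lt (ENNReal.add_lt_top.2 ⟨hff, hgg⟩)

theorem integrable_featureIntegrand (h : IsFeatureMap k μ φ) (hf : AEMeasurable f ν)
    (hg : AEMeasurable g ν)
    (hfin : lenergy k ν (fun x ↦ |f x|) (fun x ↦ |g x|) < ⊤) :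
    Integrable (featureIntegrand φ f g) ((ν.prod ν).prod μ) :=
  ⟨(h.aemeasurable_featureIntegrand hf hg).aestronglyMeasurable, by
    rwa [HasFiniteIntegral, h.lintegral_enorm_featureIntegrand hf hg]⟩

theorem energy_eq_integral_featureTransform (h : IsFeatureMap k μ φ) (hf : AEMeasurable f ν)
    (hg : AEMeasurable g ν)
    (hfin : lenergy k ν (fun x ↦ |f x|) (fun x ↦ |g x|) < ⊤) :
    energy k ν f g = ∫ w, featureTransform φ ν f w * featureTransform φ ν g w ∂μ := by
  have hint := h.integrable_featureIntegrand hf hg hfin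
  calc energy k ν f g
      = ∫ x, ∫ y, ∫ w, featureIntegrand φ f g ((x, y), w) ∂μ ∂ν ∂ν := by
        simp only [h.integral_featureIntegrand_prodMk, energy]
    _ = ∫ p, ∫ w, featureIntegrand φ f g (p, w) ∂μ ∂ν.prod ν :=
        (integral_prod _ hint.integral_prod_left).symm
    _ = ∫ w, ∫ p, featureIntegrand φ f g (p, w) ∂ν.prod ν ∂μ := integral_integral_swap hint
    _ = _ := by simp only [integral_prod_featureIntegrand]

theorem memLp_featureTransform (h : IsFeatureMap k μ φ) (hf : AEMeasurable f ν)
    (hfin : lenergy k ν (fun x ↦ |f x|) (fun x ↦ |f x|) < ⊤) :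
    MemLp (featureTransform φ ν f) 2 μ := by
  have hmeas : AEStronglyMeasurable (featureTransform φ ν f) μ :=
    (h.aemeasurable_mul hf).aestronglyMeasurable.prod_swap.integral_prod_right'
  refine (memLp_two_iff_integrable_sq hmeas).2 ?_
  simpa only [integral_prod_featureIntegrand, ← sq] using
    (h.integrable_featureIntegrand hf hf hfin).integral_prod_right

theorem sq_energy_le (h : IsFeatureMap k μ φ) (hf : AEMeasurable f ν) (hg : AEMeasurable g ν)
    (hff : lenergy k ν (fun x ↦ |f x|) (fun x ↦ |f x|) < ⊤)
    (hgg : lenergy k ν (fun x ↦ |g x|) (fun x ↦ |g x|) < ⊤) :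
    energy k ν f g ^ 2 ≤ energy k ν f f * energy k ν g g := by
  rw [h.energy_eq_integral_featureTransform hf hg (h.lenergy_abs_lt_top hf hg hff hgg),
    h.energy_eq_integral_featureTransform hf hf hff,
    h.energy_eq_integral_featureTransform hg hg hgg]
  exact sq_integral_mul_le (h.memLp_featureTransform hf hff) (h.memLp_featureTransform hg hgg)

end IsFeatureMap

end Energy

section GaussianMixture

variable {V : Type*} [NormedAddCommGroup V] [InnerProductSpace ℝ V]

theorem two_mul_sq_norm_sub_add_two_mul_sq_norm_sub (x y z : V) :
    2 * ‖x - z‖ ^ 2 + 2 * ‖y - z‖ ^ 2 = ‖x - y‖ ^ 2 + 4 * ‖midpoint ℝ x y - z‖ ^ 2 := by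
  have h := EuclideanGeometry.dist_sq_add_dist_sq_eq_two_mul_dist_midpoint_sq_add_half_dist_sq
    z x y
  simp only [dist_eq_norm, norm_sub_rev z] at h
  linarith

/-- The Gaussian `z ↦ exp (-2c ‖x - z‖²)`, normalized so that it is a feature map for the kernel
`exp (-c ‖x - y‖²)`. The square root keeps it nonnegative also for `c < 0`. -/
def gaussianFeature (c : ℝ) (x z : V) : ℝ :=
  √(((π / (4 * c)) ^ (Module.finrank ℝ V / 2 : ℝ))⁻¹) * exp (-(2 * c * ‖x - z‖ ^ 2))

theorem gaussianFeature_nonneg (c : ℝ) (x z : V) : 0 ≤ gaussianFeature c x z := by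
  unfold gaussianFeature; positivity

theorem gaussianFeature_mul_gaussianFeature {c : ℝ} (hc : 0 ≤ c) (x y z : V) :
    gaussianFeature c x z * gaussianFeature c y z =
      exp (-(c * ‖x - y‖ ^ 2)) * ((π / (4 * c)) ^ (Module.finrank ℝ V / 2 : ℝ))⁻¹ *
        exp (-(4 * c) * ‖z - midpoint ℝ x y‖ ^ 2) := by
  have hexp : exp (-(2 * c * ‖x - z‖ ^ 2)) * exp (-(2 * c * ‖y - z‖ ^ 2)) =
      exp (-(c * ‖x - y‖ ^ 2)) * exp (-(4 * c) * ‖z - midpoint ℝ x y‖ ^ 2) := by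
    rw [← exp_add, ← exp_add, norm_sub_rev z]
    congr 1
    linear_combination -c * two_mul_sq_norm_sub_add_two_mul_sq_norm_sub x y z
  rw [gaussianFeature, gaussianFeature, mul_mul_mul_comm, mul_self_sqrt (by positivity), hexp]
  ring

variable [FiniteDimensional ℝ V] [MeasurableSpace V] [BorelSpace V]

theorem lintegral_exp_neg_mul_sq_norm_sub {b : ℝ} (hb : 0 < b) (m : V) :
    ∫⁻ z, ENNReal.ofReal (exp (-b * ‖z - m‖ ^ 2)) =
      ENNReal.ofReal ((π / b) ^ (Module.finrank ℝ V / 2 : ℝ)) := by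
  have hval := GaussianFourier.integral_rexp_neg_mul_sq_norm (V := V) hb
  have hint : Integrable fun z : V ↦ exp (-b * ‖z‖ ^ 2) :=
    .of_integral_ne_zero <| hval ▸ (by positivity)
  rw [lintegral_sub_right_eq_self (fun z ↦ ENNReal.ofReal (exp (-b * ‖z‖ ^ 2))), ← hval,
    ofReal_integral_eq_lintegral_ofReal hint (ae_of_all _ fun _ ↦ (exp_pos _).le)]

theorem lintegral_gaussianFeature_mul_gaussianFeature {c : ℝ} (hc : 0 < c) (x y : V) :
    ∫⁻ z, ENNReal.ofReal (gaussianFeature c x z * gaussianFeature c y z) =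
      ENNReal.ofReal (exp (-(c * ‖x - y‖ ^ 2))) := by
  have hnorm : 0 < (π / (4 * c)) ^ (Module.finrank ℝ V / 2 : ℝ) := by positivity
  simp only [gaussianFeature_mul_gaussianFeature hc.le,
    ENNReal.ofReal_mul (mul_nonneg (exp_pos _).le (inv_pos.2 hnorm).le)]
  rw [lintegral_const_mul _ (by fun_prop), lintegral_exp_neg_mul_sq_norm_sub (by positivity),
    ← ENNReal.ofReal_mul (by positivity), inv_mul_cancel_right₀ hnorm.ne']

theorem isFeatureMap_gaussianMixture {Θ : Type*} [MeasurableSpace Θ] {ρ : Measure Θ} {c : Θ → ℝ}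
    {k : V → V → ℝ} (hc : Measurable c) (hc_pos : ∀ᵐ θ ∂ρ, 0 < c θ) (hk : ∀ x y, 0 ≤ k x y)
    (hmix : ∀ x y, ∫⁻ θ, ENNReal.ofReal (exp (-(c θ * ‖x - y‖ ^ 2))) ∂ρ = ENNReal.ofReal (k x y)) :
    IsFeatureMap k (ρ.prod volume) fun x p ↦ gaussianFeature (c p.1) x p.2 where
  measurable := by unfold gaussianFeature; fun_prop
  nonneg x p := gaussianFeature_nonneg (c p.1) x p.2
  kernel_nonneg := hk
  lintegral_mul x y := by
    rw [lintegral_prod _ (by unfold gaussianFeature; fun_prop), ← hmix]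
    refine lintegral_congr_ae ?_
    filter_upwards [hc_pos] with θ hθ using lintegral_gaussianFeature_mul_gaussianFeature hθ x y

end GaussianMixture

section BoppPodolsky

/-- The probability measure on `(0, ∞)` with density `2 / √π * exp (-u²)`. -/
def halfGaussian : Measure ℝ :=
  (volume.restrict (Ioi 0)).withDensity fun u ↦ ENNReal.ofReal (2 / √π * exp (-u ^ 2))

instance : SFinite halfGaussian := by unfold halfGaussian; infer_instance

theorem ae_halfGaussian_pos : ∀ᵐ u ∂halfGaussian, 0 < u :=
  (withDensity_absolutelyContinuous _ _).ae_le (ae_restrict_mem measurableSet_Ioi)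

theorem lintegral_exp_neg_div_sq_halfGaussian {b : ℝ} (hb : 0 ≤ b) :
    ∫⁻ u, ENNReal.ofReal (exp (-(b / u) ^ 2)) ∂halfGaussian =
      ENNReal.ofReal (exp (-(2 * b))) := by
  have hfactor (u : ℝ) :
      ENNReal.ofReal (2 / √π * exp (-u ^ 2)) * ENNReal.ofReal (exp (-(b / u) ^ 2)) =
        ENNReal.ofReal (2 / √π) * ENNReal.ofReal (exp (-(1 * u) ^ 2 - (b / u) ^ 2)) := by
    rw [← ENNReal.ofReal_mul (by positivity), ← ENNReal.ofReal_mul (by positivity), one_mul,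
      sub_eq_add_neg, exp_add, mul_assoc]
  rw [halfGaussian, lintegral_withDensity_eq_lintegral_mul _ (by fun_prop) (by fun_prop)]
  simp only [Pi.mul_apply, hfactor]
  rw [lintegral_const_mul _ (by fun_prop), lintegral_exp_neg_mul_sq_sub_div_sq one_pos hb,
    ← ENNReal.ofReal_mul (by positivity)]
  congr 1
  field_simp

variable {V : Type*} [NormedAddCommGroup V]

/-- The Bopp–Podolsky kernel with `a = 1` on an arbitrary normed space; `K1` is the case of `ℝ³`. -/
def boppPodolskyKernel (x : V) : ℝ := if x = 0 then 1 else (1 - exp (-‖x‖)) / ‖x‖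

theorem K1_eq_boppPodolskyKernel : K1 = boppPodolskyKernel := by
  funext x
  unfold K1 boppPodolskyKernel
  -- The two conditionals differ only in their decidability instances.
  congr

theorem boppPodolskyKernel_eq_integral (x : V) :
    boppPodolskyKernel x = ∫ t in (0 : ℝ)..1, exp (-(t * ‖x‖)) := by
  by_cases hx : x = 0
  · simp [boppPodolskyKernel, hx]
  · have hx' : -‖x‖ ≠ 0 := by simpa using hx
    simp only [boppPodolskyKernel, if_neg hx, ← mul_neg]
    rw [intervalIntegral.integral_comp_mul_right (fun t ↦ exp t) hx', integral_exp, zero_mul,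
      one_mul, exp_zero, smul_eq_mul]
    field_simp
    ring

theorem boppPodolskyKernel_nonneg (x : V) : 0 ≤ boppPodolskyKernel x := by
  rw [boppPodolskyKernel_eq_integral]
  exact intervalIntegral.integral_nonneg zero_le_one fun t _ ↦ (exp_pos _).le

theorem lintegral_Ioc_exp_neg_mul_norm (x : V) :
    ∫⁻ t in Ioc (0 : ℝ) 1, ENNReal.ofReal (exp (-(t * ‖x‖))) =
      ENNReal.ofReal (boppPodolskyKernel x) := by
  have hcont : Continuous fun t : ℝ ↦ exp (-(t * ‖x‖)) := by fun_prop
  rw [boppPodolskyKernel_eq_integral, intervalIntegral.integral_of_le zero_le_one,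
    ofReal_integral_eq_lintegral_ofReal hcont.integrableOn_Ioc
      (ae_of_all _ fun _ ↦ (exp_pos _).le)]

theorem lintegral_gaussianMixture_eq_boppPodolskyKernel (x : V) :
    ∫⁻ θ : ℝ × ℝ, ENNReal.ofReal (exp (-((θ.1 / (2 * θ.2)) ^ 2 * ‖x‖ ^ 2)))
        ∂(volume.restrict (Ioc 0 1)).prod halfGaussian =
      ENNReal.ofReal (boppPodolskyKernel x) := by
  rw [lintegral_prod _ (by fun_prop), ← lintegral_Ioc_exp_neg_mul_norm]
  refine setLIntegral_congr_fun measurableSet_Ioc fun t ht ↦ ?_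
  have hrescale (u : ℝ) : (t / (2 * u)) ^ 2 * ‖x‖ ^ 2 = (t * ‖x‖ / 2 / u) ^ 2 := by ring
  simp only [hrescale]
  rw [lintegral_exp_neg_div_sq_halfGaussian (by have := ht.1; positivity),
    mul_div_cancel₀ _ two_ne_zero]

variable [InnerProductSpace ℝ V] [FiniteDimensional ℝ V] [MeasurableSpace V] [BorelSpace V]

theorem isFeatureMap_boppPodolskyKernel :
    IsFeatureMap (fun x y : V ↦ boppPodolskyKernel (x - y))
      (((volume.restrict (Ioc 0 1)).prod halfGaussian).prod volume)
      fun x p ↦ gaussianFeature ((p.1.1 / (2 * p.1.2)) ^ 2) x p.2 := by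
  refine isFeatureMap_gaussianMixture (c := fun θ : ℝ × ℝ ↦ (θ.1 / (2 * θ.2)) ^ 2)
    (by fun_prop) ?_ (fun x y ↦ boppPodolskyKernel_nonneg (x - y))
    fun x y ↦ lintegral_gaussianMixture_eq_boppPodolskyKernel (x - y)
  filter_upwards [Measure.quasiMeasurePreserving_fst.ae (ae_restrict_mem measurableSet_Ioc),
    Measure.quasiMeasurePreserving_snd.ae ae_halfGaussian_pos] with θ ht hu
  have := ht.1
  positivity

theorem energy_cauchy_schwarz_general (ν : Measure V) [SFinite ν] {f g : V → ℝ}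
    (hf : AEMeasurable f ν) (hg : AEMeasurable g ν)
    (hVf : lenergy (fun x y ↦ boppPodolskyKernel (x - y)) ν (fun x ↦ |f x|) (fun x ↦ |f x|) < ⊤)
    (hVg : lenergy (fun x y ↦ boppPodolskyKernel (x - y)) ν (fun x ↦ |g x|) (fun x ↦ |g x|) < ⊤) :
    lenergy (fun x y ↦ boppPodolskyKernel (x - y)) ν (fun x ↦ |f x|) (fun x ↦ |g x|) < ⊤ ∧
      energy (fun x y ↦ boppPodolskyKernel (x - y)) ν f g ^ 2 ≤
        energy (fun x y ↦ boppPodolskyKernel (x - y)) ν f f *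
          energy (fun x y ↦ boppPodolskyKernel (x - y)) ν g g :=
  ⟨isFeatureMap_boppPodolskyKernel.lenergy_abs_lt_top hf hg hVf hVg,
    isFeatureMap_boppPodolskyKernel.sq_energy_le hf hg hVf hVg⟩

end BoppPodolsky

/-- Cauchy–Schwarz inequality for the Bopp–Podolsky energy: if `V(|f|,|f|) < ∞` and
`V(|g|,|g|) < ∞`, then `V(|f|,|g|) < ∞` and `V(f,g)² ≤ V(f,f) V(g,g)`. -/
theorem energy_cauchy_schwarz (f g : E3 → ℝ) (hf : Measurable f) (hg : Measurable g)
    (hVf : Vlin (fun x => |f x|) (fun x => |f x|) < ⊤)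
    (hVg : Vlin (fun x => |g x|) (fun x => |g x|) < ⊤) :
    Vlin (fun x => |f x|) (fun x => |g x|) < ⊤ ∧
    (Vr f g) ^ 2 ≤ Vr f f * Vr g g := by
  simp only [Vlin, Vr, K1_eq_boppPodolskyKernel] at hVf hVg ⊢
  exact energy_cauchy_schwarz_general volume hf.aemeasurable hg.aemeasurable hVf hVg
end
end
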